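/- Let p be a prime and G a p-group of order p^n with n ≥ 5, |G'| = p^2, and |M(G)| = p^{(n-1)(n-2)/2 - 1}. Then p ≠ 2, n = 6, and G is isomorphic to ℤ_p × K, where K is a semidirect product (ℤ_p)^4 ⋊_θ ℤ_p for some homomorphism θ : ℤ_p → Aut((ℤ_p)^4), with K having derived subgroup of order p^2 and center of order p^2. -/

import Mathlib

/-- The kernel of the canonical free presentation `FreeGroup G → G`. -/
def presentationKernel (G : Type u) [Group G] : Subgroup (FreeGroup G) :=
  (FreeGroup.lift (id : G → G)).ker

/-- The Schur multiplier `M(G) = H₂(G, ℤ)` (second integral group homology) of a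
group `G`, realised via Hopf's integral formula `H₂(G, ℤ) ≅ (R ⊓ [F, F]) / [F, R]`,
where `F = FreeGroup G` is the canonical free group surjecting onto `G` with
kernel `R`. -/
def SchurMultiplier (G : Type u) [Group G] : Type u :=
  ↥(presentationKernel G ⊓ commutator (FreeGroup G)) ⧸
    (⁅(⊤ : Subgroup (FreeGroup G)), presentationKernel G⁆.subgroupOf
      (presentationKernel G ⊓ commutator (FreeGroup G)))

/-- A finite `p`-group `H` is extraspecial if its center, derived subgroup and
Frattini subgroup coincide and have order `p`. -/
def IsExtraspecial (p : ℕ) (H : Type*) [Group H] : Prop :=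
  Subgroup.center H = commutator H ∧ Subgroup.center H = frattini H ∧
    Nat.card (Subgroup.center H) = p

/-!
Let `F → G` be a free presentation with kernel `R` and put `H = F / [F, R]`. Then `H → G` is a
central extension with `|H'| = |G'| |M(G)| = p ^ (C(n - 1, 2) + 1)`. Since commutators in `H` only
depend on the images in `G`, comparing `H'` with the derived subgroup of a central extension of
`G / G'` bounds it by `|γ₃(H)| p ^ C(n - 2, 2)`, so `|γ₃(H)| ≥ p ^ (n - 1)`. For `n ≥ 5` this is
only possible if `G` has class two and `G / G'` is elementary abelian.

Then `[x, y, z]` in `H` defines a bilinear map `β : V × W → γ₃(H)` with `V = G / G'`, `W = G'`,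
and the commutator form `ω : V × V → W` satisfies the Jacobi identity
`β x (ω y z) + β y (ω z x) + β z (ω x y) = 0`. As `dim W = 2`, the image of `β` can have dimension
at least `dim V + 1` only if `ω` has a frame `a, b₁, b₂` with `ω b₁ b₂ = 0` that together with the
kernel of `ω` spans `V`, and `dim V ≤ 4`. The `p`-th powers of `G` impose further relations, which
force `p ≠ 2` and exponent `p`. This determines `G` for `n = 5` and `n = 6`. For `n = 5` explicit
2-cocycles show `|M(G)| ≥ p ^ 6`, which is too large.
-/

universe u v w

open scoped commutatorElement

section Cardinality

variable {H : Type u} {G : Type v} [Group H] [Group G]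

theorem card_eq_card_map_mul_card_ker_inf (f : H →* G) (K : Subgroup H) :
    Nat.card K = Nat.card (K.map f) * Nat.card (f.ker ⊓ K : Subgroup H) := by
  rw [← Subgroup.relIndex_ker, ← Subgroup.inf_relIndex_right, mul_comm,
    ← Subgroup.relIndex_bot_left, ← Subgroup.relIndex_bot_left,
    Subgroup.relIndex_mul_relIndex _ _ _ bot_le inf_le_right]

theorem map_commutator_of_surjective {f : H →* G} (hf : Function.Surjective f) :
    (commutator H).map f = commutator G := by
  rw [map_commutator_eq, MonoidHom.range_eq_top.mpr hf, commutator_def]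

/-- The third term `γ₃(G) = [G', G]` of the lower central series of `G`. -/
abbrev gammaThree (G : Type u) [Group G] : Subgroup G :=
  ⁅commutator G, (⊤ : Subgroup G)⁆

theorem map_gammaThree_of_surjective {f : H →* G} (hf : Function.Surjective f) :
    (gammaThree H).map f = gammaThree G := by
  rw [Subgroup.map_commutator, map_commutator_of_surjective hf,
    Subgroup.map_top_of_surjective f hf]

theorem gammaThree_le_commutator (G : Type u) [Group G] : gammaThree G ≤ commutator G :=
  Subgroup.commutator_le_left _ _

theorem commutatorElement_mem_commutator (x y : G) : ⁅x, y⁆ ∈ commutator G :=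
  Subgroup.commutator_mem_commutator (Subgroup.mem_top x) (Subgroup.mem_top y)

theorem index_eq_pow_sub {p n k : ℕ} (hp : 1 < p) (hG : Nat.card G = p ^ n) {N : Subgroup G}
    (hN : Nat.card N = p ^ k) : k ≤ n ∧ N.index = p ^ (n - k) := by
  have hmul := N.card_mul_index
  rw [hN, hG] at hmul
  have hkn : k ≤ n := (Nat.pow_dvd_pow_iff_le_right hp).mp (Dvd.intro _ hmul)
  rw [← Nat.add_sub_cancel' hkn, pow_add] at hmul
  exact ⟨hkn, Nat.eq_of_mul_eq_mul_left (by positivity) hmul⟩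

theorem card_commutator_eq_card_mul {N : Subgroup G} [N.Normal] (hN : N ≤ commutator G) :
    Nat.card (commutator G) = Nat.card N * Nat.card (commutator (G ⧸ N)) := by
  rw [card_eq_card_map_mul_card_ker_inf (QuotientGroup.mk' N),
    map_commutator_of_surjective (QuotientGroup.mk'_surjective N), QuotientGroup.ker_mk',
    inf_eq_left.mpr hN, mul_comm]

theorem card_commutator_quotient_zpowers {p : ℕ} (hp : 0 < p)
    (hG' : Nat.card (commutator G) = p ^ 2) {x : G} (hx : x ∈ commutator G) (hxo : orderOf x = p)
    [(Subgroup.zpowers x).Normal] :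
    Nat.card (commutator (G ⧸ Subgroup.zpowers x)) = p := by
  have hcard := card_commutator_eq_card_mul (Subgroup.zpowers_le.mpr hx)
  rw [Nat.card_zpowers, hxo, hG', sq] at hcard
  exact (Nat.eq_of_mul_eq_mul_left hp hcard).symm

theorem normal_of_le_center {N : Subgroup G} (hN : N ≤ Subgroup.center G) : N.Normal where
  conj_mem n hn g := by rwa [Subgroup.mem_center_iff.mp (hN hn) g, mul_inv_cancel_right]

end Cardinality

section PGroup

variable {G : Type u} [Group G] [Finite G] {p : ℕ} [hp : Fact p.Prime]

theorem exists_mem_center_orderOf_eq (hG : IsPGroup p G) (N : Subgroup G) [N.Normal]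
    (hN : N ≠ ⊥) : ∃ x ∈ N, x ∈ Subgroup.center G ∧ orderOf x = p := by
  have hpN : IsPGroup p (ConjAct G) := hG
  have hpdvd : p ∣ Nat.card N :=
    (hG.to_subgroup N).card_eq_or_dvd.resolve_left (mt Subgroup.card_eq_one.mp hN)
  obtain ⟨b, hb, hb1⟩ := hpN.exists_fixed_point_of_prime_dvd_card_of_fixed_point N hpdvd
    (a := 1) fun g => smul_one g
  have hbZ : (b : G) ∈ N ⊓ Subgroup.center G := by
    refine ⟨b.2, Subgroup.mem_center_iff.mpr fun g => ?_⟩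
    exact mul_inv_eq_iff_eq_mul.mp (congrArg Subtype.val (hb (ConjAct.toConjAct g)))
  have hne : N ⊓ Subgroup.center G ≠ ⊥ := fun h =>
    hb1 (Subtype.ext (Subgroup.mem_bot.mp (h ▸ hbZ)).symm)
  obtain ⟨x, hx⟩ := exists_prime_orderOf_dvd_card' p
    ((hG.to_subgroup (N ⊓ Subgroup.center G)).card_eq_or_dvd.resolve_left
      (mt Subgroup.card_eq_one.mp hne))
  exact ⟨x, x.2.1, x.2.2, by rwa [Subgroup.orderOf_coe]⟩

theorem zpowers_eq_of_mem_of_card_eq {N : Subgroup G} (hN : Nat.card N = p) {x : G} (hx : x ∈ N)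
    (hx1 : x ≠ 1) : Subgroup.zpowers x = N := by
  refine Subgroup.eq_of_le_of_card_ge (Subgroup.zpowers_le.mpr hx) ?_
  have hdvd := Subgroup.card_dvd_of_le (Subgroup.zpowers_le.mpr hx)
  rw [hN, Nat.dvd_prime hp.out, Nat.card_zpowers, orderOf_eq_one_iff] at hdvd
  rw [hN, Nat.card_zpowers, hdvd.resolve_left hx1]

theorem eq_of_lt_of_le_of_card_eq_sq {K L N : Subgroup G} (hK : Nat.card K = p)
    (hN : Nat.card N = p ^ 2) (hKL : K < L) (hLN : L ≤ N) : L = N := by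
  obtain ⟨j, -, hL⟩ := (Nat.dvd_prime_pow hp.out).mp (hN ▸ Subgroup.card_dvd_of_le hLN)
  refine Subgroup.eq_of_le_of_card_ge hLN ?_
  rw [hN, hL, Nat.pow_le_pow_iff_right hp.out.one_lt]
  by_contra! hlt
  refine hKL.not_ge (Subgroup.eq_of_le_of_card_ge hKL.le ?_).ge
  rw [hL, hK]
  exact (Nat.pow_le_pow_right hp.out.pos (Nat.le_of_lt_succ hlt)).trans (pow_one p).le

theorem le_center_of_card_eq_prime (hG : IsPGroup p G) {N : Subgroup G} [N.Normal]
    (hN : Nat.card N = p) : N ≤ Subgroup.center G := by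
  have hne : N ≠ ⊥ := by
    rintro rfl
    exact hp.out.one_lt.ne (by simpa using hN)
  obtain ⟨x, hxN, hxZ, hx⟩ := exists_mem_center_orderOf_eq hG N hne
  rw [← zpowers_eq_of_mem_of_card_eq hN hxN fun h => hp.out.ne_one (by simpa [h] using hx.symm)]
  exact Subgroup.zpowers_le.mpr hxZ

end PGroup

/-! ### Central extensions -/

/-- `π` exhibits `H` as a central extension of `G`: it is surjective with central kernel. -/
structure IsCentralExtension {H : Type u} {G : Type v} [Group H] [Group G] (π : H →* G) :
    Prop where
  surjective : Function.Surjective π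
  ker_le_center : π.ker ≤ Subgroup.center H

namespace IsCentralExtension

variable {H : Type u} {G : Type v} [Group H] [Group G] {π : H →* G}

theorem commute_of_map_eq_one (h : IsCentralExtension π) {a : H} (ha : π a = 1) (y : H) :
    Commute a y :=
  (Subgroup.mem_center_iff.mp (h.ker_le_center ha) y).symm

theorem commutatorElement_eq_one_of_map_eq_one (h : IsCentralExtension π) {a : H} (ha : π a = 1)
    (y : H) : ⁅a, y⁆ = 1 :=
  commutatorElement_eq_one_iff_commute.mpr (h.commute_of_map_eq_one ha y)

theorem map_commutatorElement_eq_one {x : H} (hx : π x ∈ Subgroup.center G) (y : H) :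
    π ⁅x, y⁆ = 1 := by
  rw [map_commutatorElement, commutatorElement_eq_one_iff_commute]
  exact (Subgroup.mem_center_iff.mp hx (π y)).symm

theorem commutatorElement_congr (h : IsCentralExtension π) {x x' y y' : H} (hx : π x = π x')
    (hy : π y = π y') : ⁅x, y⁆ = ⁅x', y'⁆ := by
  have congr_left {x x' : H} (hx : π x = π x') (y : H) : ⁅x, y⁆ = ⁅x', y⁆ := by
    have hker : π (x'⁻¹ * x) = 1 := by simp [hx]
    calc ⁅x, y⁆ = ⁅x' * (x'⁻¹ * x), y⁆ := by rw [mul_inv_cancel_left]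
      _ = ⁅x', y⁆ := by
        rw [commutatorElement_mul_left_eq_conj_mul,
          h.commutatorElement_eq_one_of_map_eq_one hker, mul_one, mul_inv_cancel, one_mul]
  rw [congr_left hx, ← commutatorElement_inv, congr_left hy, commutatorElement_inv]

theorem commutatorElement_mul_left (h : IsCentralExtension π) {x' : H}
    (hx' : π x' ∈ Subgroup.center G) (x y : H) : ⁅x * x', y⁆ = ⁅x, y⁆ * ⁅x', y⁆ := by
  have hcomm := h.commute_of_map_eq_one (map_commutatorElement_eq_one hx' y)
  rw [commutatorElement_mul_left_eq_conj_mul, ← (hcomm x).eq, mul_inv_cancel_right,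
    (hcomm _).eq]

/-- The homomorphism `y ↦ ⁅x, y⁆` attached to an element `x` of a central extension of `G` whose
image in `G` is central. -/
def commutatorHom (h : IsCentralExtension π) {x : H} (hx : π x ∈ Subgroup.center G) : H →* H where
  toFun y := ⁅x, y⁆
  map_one' := commutatorElement_one_right x
  map_mul' y z := by
    have hcomm := h.commute_of_map_eq_one (map_commutatorElement_eq_one hx z) y⁻¹
    rw [commutatorElement_mul_right_eq_mul_conj, mul_assoc, mul_assoc, hcomm.eq,
      mul_inv_cancel_left]

variable {x : H}

theorem commutatorHom_apply (h : IsCentralExtension π) (hx : π x ∈ Subgroup.center G)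
    (y : H) : h.commutatorHom hx y = ⁅x, y⁆ := rfl

theorem commutatorElement_mul_right (h : IsCentralExtension π) (hx : π x ∈ Subgroup.center G)
    (y z : H) : ⁅x, y * z⁆ = ⁅x, y⁆ * ⁅x, z⁆ :=
  map_mul (h.commutatorHom hx) y z

theorem commutatorElement_zpow_left (h : IsCentralExtension π) (hx : π x ∈ Subgroup.center G)
    (y : H) (k : ℤ) : ⁅x ^ k, y⁆ = ⁅x, y⁆ ^ k := by
  have hcomm := h.commute_of_map_eq_one (map_commutatorElement_eq_one hx y) x
  have hconj : y * x * y⁻¹ = ⁅x, y⁆⁻¹ * x := by simp [commutatorElement_def, mul_assoc]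
  calc ⁅x ^ k, y⁆ = x ^ k * ((y * x * y⁻¹) ^ k)⁻¹ := by
        rw [conj_zpow, commutatorElement_def, mul_inv_rev, mul_inv_rev, inv_inv]
        simp only [mul_assoc]
    _ = ⁅x, y⁆ ^ k := by
        rw [hconj, hcomm.inv_left.mul_zpow, mul_inv_rev, mul_inv_cancel_left, inv_zpow, inv_inv]

theorem commutatorElement_conj_right (h : IsCentralExtension π) (hx : π x ∈ Subgroup.center G)
    (y z : H) : ⁅x, y * z * y⁻¹⁆ = ⁅x, z⁆ := by
  have hcomm := h.commute_of_map_eq_one (map_commutatorElement_eq_one hx z) (h.commutatorHom hx y)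
  change h.commutatorHom hx _ = _
  rw [map_mul, map_mul, map_inv, h.commutatorHom_apply hx z, ← hcomm.eq, mul_inv_cancel_right]

theorem commutatorHom_range_le_ker (h : IsCentralExtension π) (hx : π x ∈ Subgroup.center G) :
    (h.commutatorHom hx).range ≤ π.ker := by
  rintro _ ⟨y, rfl⟩
  exact map_commutatorElement_eq_one hx y

instance commutatorHom_range_normal (h : IsCentralExtension π)
    (hx : π x ∈ Subgroup.center G) : (h.commutatorHom hx).range.Normal where
  conj_mem n hn g := by
    rwa [← (h.commute_of_map_eq_one (h.commutatorHom_range_le_ker hx hn) g).eq,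
      mul_inv_cancel_right]

theorem commutatorHom_range_le_commutator (h : IsCentralExtension π)
    (hx : π x ∈ Subgroup.center G) :
    (h.commutatorHom hx).range ≤ commutator H := by
  rintro _ ⟨y, rfl⟩
  exact commutatorElement_mem_commutator x y

theorem card_commutatorHom_range_le_index (h : IsCentralExtension π)
    (hx : π x ∈ Subgroup.center G) {K : Subgroup G} (hK : K.index ≠ 0)
    (hKx : ∀ y, π y ∈ K → ⁅x, y⁆ = 1) : Nat.card (h.commutatorHom hx).range ≤ K.index := by
  rw [← Subgroup.index_ker, ← Subgroup.index_comap_of_surjective K h.surjective]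
  refine Nat.le_of_dvd (Nat.pos_of_ne_zero ?_) (Subgroup.index_dvd_of_le hKx)
  rwa [Subgroup.index_comap_of_surjective K h.surjective]

theorem exists_mem_commutator_map_eq (h : IsCentralExtension π) {g : G} (hg : g ∈ commutator G) :
    ∃ z ∈ commutator H, π z = g := by
  rwa [← map_commutator_of_surjective h.surjective] at hg

theorem commutatorElement_eq_one_of_map_mem_commutator (h : IsCentralExtension π)
    (hx : π x ∈ Subgroup.center G) {y : H} (hy : π y ∈ commutator G) :
    ⁅x, y⁆ = 1 := by
  obtain ⟨z, hz, hzy⟩ := h.exists_mem_commutator_map_eq hy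
  have hker : commutator H ≤ (h.commutatorHom hx).ker := by
    rw [commutator_def, Subgroup.commutator_le]
    intro a _ b _
    rw [MonoidHom.mem_ker, map_commutatorElement]
    exact h.commutatorElement_eq_one_of_map_eq_one (map_commutatorElement_eq_one hx a) _
  rw [h.commutatorElement_congr rfl hzy.symm]
  exact hker hz

theorem commutatorElement_jacobi (h : IsCentralExtension π)
    (hG : commutator G ≤ Subgroup.center G) (a b c : H) :
    ⁅⁅a, b⁆, c⁆ * ⁅⁅b, c⁆, a⁆ * ⁅⁅c, a⁆, b⁆ = 1 := by
  have hcen (a b : H) : π ⁅a, b⁆ ∈ Subgroup.center G := by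
    rw [map_commutatorElement]
    exact hG (commutatorElement_mem_commutator _ _)
  simpa only [h.commutatorElement_conj_right (hcen _ _)] using
    commutatorElement_commutatorElement_conj_mul a b c

theorem quotientMap (h : IsCentralExtension π) {N : Subgroup H} [N.Normal] {K : Subgroup G}
    [K.Normal] (hNK : N ≤ K.comap π)
    (hKN : ∀ x, π x ∈ K → ∀ y, ⁅x, y⁆ ∈ N) :
    IsCentralExtension (QuotientGroup.map N K π hNK) where
  surjective := QuotientGroup.map_surjective_of_surjective _ _ _
    (QuotientGroup.mk_surjective.comp h.surjective) _
  ker_le_center a ha := by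
    obtain ⟨a, rfl⟩ := QuotientGroup.mk_surjective a
    refine Subgroup.mem_center_iff.mpr fun y => ?_
    obtain ⟨y, rfl⟩ := QuotientGroup.mk_surjective y
    have hay := (QuotientGroup.eq_one_iff _).mpr (hKN a ((QuotientGroup.eq_one_iff _).mp ha) y)
    exact (commutatorElement_eq_one_iff_mul_comm.mp hay).symm

theorem commutatorHom_range_le_comap (h : IsCentralExtension π) (hx : π x ∈ Subgroup.center G)
    (K : Subgroup G) : (h.commutatorHom hx).range ≤ K.comap π :=
  (h.commutatorHom_range_le_ker hx).trans (Subgroup.ker_le_comap π K)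

theorem quotientMap_commutatorHom_range (h : IsCentralExtension π)
    (hx : π x ∈ Subgroup.center G) [(Subgroup.zpowers (π x)).Normal] :
    IsCentralExtension (QuotientGroup.map (h.commutatorHom hx).range (Subgroup.zpowers (π x)) π
      (h.commutatorHom_range_le_comap hx _)) := by
  refine h.quotientMap _ ?_
  rintro y ⟨k, hk⟩ z
  rw [h.commutatorElement_congr (x' := x ^ k) (by rw [map_zpow]; exact hk.symm) rfl,
    h.commutatorElement_zpow_left hx]
  exact zpow_mem (MonoidHom.mem_range.mpr ⟨z, rfl⟩) k

theorem quotientMap_gammaThree (h : IsCentralExtension π) :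
    IsCentralExtension (QuotientGroup.map (gammaThree H) (commutator G) π
      (by
        rw [← Subgroup.map_le_iff_le_comap, ← map_commutator_of_surjective h.surjective]
        exact Subgroup.map_mono (gammaThree_le_commutator H))) := by
  refine h.quotientMap _ fun x hx y => ?_
  obtain ⟨z, hz, hzx⟩ := h.exists_mem_commutator_map_eq hx
  rw [h.commutatorElement_congr hzx.symm rfl]
  exact Subgroup.commutator_mem_commutator hz (Subgroup.mem_top y)

end IsCentralExtension

/-! ### The free central extension -/

instance presentationKernel_normal (G : Type u) [Group G] : (presentationKernel G).Normal :=
  inferInstanceAs (FreeGroup.lift (id : G → G)).ker.Normal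

/-- The free central extension `F / [F, R]` of `G`, where `1 → R → F → G → 1` is the canonical free
presentation. Its projection onto `G` factors through every central extension of `G`, and the
Schur multiplier of `G` is the intersection of its kernel with the derived subgroup. -/
abbrev FreeCentralExtension (G : Type u) [Group G] : Type u :=
  FreeGroup G ⧸ ⁅(⊤ : Subgroup (FreeGroup G)), presentationKernel G⁆

namespace FreeCentralExtension

variable {G : Type u} [Group G]

/-- The projection `F / [F, R] → G` induced by the canonical presentation `F → G`. -/
def proj (G : Type u) [Group G] : FreeCentralExtension G →* G :=
  QuotientGroup.lift _ (FreeGroup.lift id) (Subgroup.commutator_le_right _ (presentationKernel G))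

theorem isCentralExtension_proj (G : Type u) [Group G] : IsCentralExtension (proj G) where
  surjective g := ⟨QuotientGroup.mk (FreeGroup.of g), FreeGroup.lift_apply_of⟩
  ker_le_center a ha := by
    obtain ⟨a, rfl⟩ := QuotientGroup.mk_surjective a
    refine Subgroup.mem_center_iff.mpr fun y => ?_
    obtain ⟨y, rfl⟩ := QuotientGroup.mk_surjective y
    have hya : ⁅y, a⁆ ∈ ⁅(⊤ : Subgroup (FreeGroup G)), presentationKernel G⁆ :=
      Subgroup.commutator_mem_commutator (Subgroup.mem_top y) ha
    exact commutatorElement_eq_one_iff_mul_comm.mp ((QuotientGroup.eq_one_iff _).mpr hya)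

theorem card_ker_proj_inf_commutator (G : Type u) [Group G] :
    Nat.card ((proj G).ker ⊓ commutator (FreeCentralExtension G) : Subgroup _) =
      Nat.card (SchurMultiplier G) := by
  let mk := QuotientGroup.mk' ⁅(⊤ : Subgroup (FreeGroup G)), presentationKernel G⁆
  let K := presentationKernel G ⊓ commutator (FreeGroup G)
  have hrange : (mk.comp K.subtype).range =
      (proj G).ker ⊓ commutator (FreeCentralExtension G) := by
    rw [MonoidHom.range_comp, Subgroup.range_subtype,
      ← map_commutator_of_surjective (QuotientGroup.mk'_surjective _)]
    ext x
    constructor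
    · rintro ⟨y, ⟨hyR, hyF⟩, rfl⟩
      exact ⟨hyR, y, hyF, rfl⟩
    · rintro ⟨hx, y, hy, rfl⟩
      exact ⟨y, ⟨hx, hy⟩, rfl⟩
  have hker : (mk.comp K.subtype).ker =
      ⁅(⊤ : Subgroup (FreeGroup G)), presentationKernel G⁆.subgroupOf K := by
    rw [← MonoidHom.comap_ker, QuotientGroup.ker_mk', Subgroup.subgroupOf]
  rw [← hrange, ← Nat.card_congr (QuotientGroup.quotientKerEquivRange _).toEquiv, hker]
  rfl

theorem card_commutator (G : Type u) [Group G] :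
    Nat.card (commutator (FreeCentralExtension G)) =
      Nat.card (commutator G) * Nat.card (SchurMultiplier G) := by
  rw [card_eq_card_map_mul_card_ker_inf (proj G), card_ker_proj_inf_commutator,
    map_commutator_of_surjective (isCentralExtension_proj G).surjective]

theorem exists_hom_comp_eq_proj {E : Type v} [Group E] {ρ : E →* G} (h : IsCentralExtension ρ) :
    ∃ ψ : FreeCentralExtension G →* E, ρ.comp ψ = proj G := by
  let s : FreeGroup G →* E := FreeGroup.lift (Function.surjInv h.surjective)
  have hs : ρ.comp s = FreeGroup.lift id := FreeGroup.ext_hom _ _ fun g => by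
    simp [s, Function.surjInv_eq]
  have hker : ⁅(⊤ : Subgroup (FreeGroup G)), presentationKernel G⁆ ≤ s.ker := by
    refine Subgroup.commutator_le.mpr fun y _ r hr => ?_
    have hsr : ρ (s r) = 1 := (DFunLike.congr_fun hs r).trans hr
    rw [MonoidHom.mem_ker, map_commutatorElement, commutatorElement_eq_one_iff_commute]
    exact (h.commute_of_map_eq_one hsr (s y)).symm
  refine ⟨QuotientGroup.lift _ s hker, MonoidHom.ext fun x => ?_⟩
  obtain ⟨x, rfl⟩ := QuotientGroup.mk_surjective x
  exact DFunLike.congr_fun hs x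

end FreeCentralExtension

namespace IsCentralExtension

variable {H : Type u} {G : Type v} [Group H] [Group G] {π : H →* G} {p m : ℕ}

theorem commutatorElement_eq_one_of_map_mem_zpowers {x y : H} (h : IsCentralExtension π)
    (hx : π x ∈ Subgroup.center G) (hy : π y ∈ Subgroup.zpowers (π x)) : ⁅x, y⁆ = 1 := by
  obtain ⟨k, hk⟩ := hy
  rw [h.commutatorElement_congr (y' := x ^ k) rfl (by rw [map_zpow]; exact hk.symm),
    ← commutatorElement_inv, h.commutatorElement_zpow_left hx, commutatorElement_self, one_zpow,
    inv_one]

theorem card_commutator_le_pow_choose_succ (h : IsCentralExtension π) (hp : 1 < p)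
    (hG : Nat.card G = p ^ m) {x : H} (hx : π x ∈ Subgroup.center G) {k : ℕ}
    (hk : orderOf (π x) = p ^ k)
    (hquot : Nat.card (commutator (H ⧸ (h.commutatorHom hx).range)) ≤ p ^ (m - k).choose 2) :
    Nat.card (commutator H) ≤ p ^ (m - k + 1).choose 2 := by
  have hindex := (index_eq_pow_sub hp hG ((Nat.card_zpowers _).trans hk)).2
  have hrange : Nat.card (h.commutatorHom hx).range ≤ p ^ (m - k) := by
    rw [← hindex]
    refine h.card_commutatorHom_range_le_index hx (by rw [hindex]; positivity) fun y hy => ?_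
    exact h.commutatorElement_eq_one_of_map_mem_zpowers hx hy
  calc Nat.card (commutator H)
      = Nat.card (h.commutatorHom hx).range *
          Nat.card (commutator (H ⧸ (h.commutatorHom hx).range)) :=
        card_commutator_eq_card_mul (h.commutatorHom_range_le_commutator hx)
    _ ≤ p ^ (m - k) * p ^ (m - k).choose 2 := Nat.mul_le_mul hrange hquot
    _ = p ^ (m - k + 1).choose 2 := by
        rw [← pow_add, Nat.choose_succ_succ' (m - k) 1, Nat.choose_one_right]

-- Schur's theorem in the quantitative form of Green, by peeling off a central cyclic subgroup.
theorem card_commutator_le_pow_choose (h : IsCentralExtension π) (hp : p.Prime)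
    (hG : Nat.card G = p ^ m) : Nat.card (commutator H) ≤ p ^ m.choose 2 := by
  induction m using Nat.strong_induction_on generalizing H G with
  | _ m ih =>
  have := Fact.mk hp
  have : Finite G := Nat.finite_of_card_ne_zero (by rw [hG]; exact pow_ne_zero m hp.ne_zero)
  rcases subsingleton_or_nontrivial G with _ | _
  · have hbot : commutator H = ⊥ := by
      rw [commutator_def, eq_bot_iff, Subgroup.commutator_le]
      exact fun a _ b _ => h.commutatorElement_eq_one_of_map_eq_one (Subsingleton.elim _ _) b
    rw [hbot, Subgroup.card_bot]
    exact Nat.one_le_pow _ _ hp.pos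
  · obtain ⟨g, -, hgZ, hg⟩ :=
      exists_mem_center_orderOf_eq (IsPGroup.of_card hG) (⊤ : Subgroup G) top_ne_bot
    obtain ⟨x, rfl⟩ := h.surjective g
    have : (Subgroup.zpowers (π x)).Normal := normal_of_le_center (Subgroup.zpowers_le.mpr hgZ)
    have hindex := index_eq_pow_sub hp.one_lt hG
      (((Nat.card_zpowers _).trans hg).trans (pow_one p).symm)
    have hquot := ih (m - 1) (by omega) (h.quotientMap_commutatorHom_range hgZ) hindex.2
    simpa [Nat.sub_add_cancel hindex.1] using
      h.card_commutator_le_pow_choose_succ hp.one_lt hG hgZ (hg.trans (pow_one p).symm) hquot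

theorem card_commutator_le_pow_choose_of_pow_ne_one (h : IsCentralExtension π) (hp : p.Prime)
    (hG : Nat.card G = p ^ m) {g : G} (hgZ : g ∈ Subgroup.center G) (hg : g ^ p ≠ 1) :
    Nat.card (commutator H) ≤ p ^ (m - 1).choose 2 := by
  have := Fact.mk hp
  obtain ⟨k, hk⟩ := IsPGroup.iff_orderOf.mp (IsPGroup.of_card hG) g
  have hk2 : 2 ≤ k := by
    by_contra! hlt
    refine hg (orderOf_dvd_iff_pow_eq_one.mp ?_)
    simpa [hk] using pow_dvd_pow p (Nat.le_of_lt_succ hlt)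
  obtain ⟨x, rfl⟩ := h.surjective g
  have : (Subgroup.zpowers (π x)).Normal := normal_of_le_center (Subgroup.zpowers_le.mpr hgZ)
  have hindex := index_eq_pow_sub hp.one_lt hG ((Nat.card_zpowers _).trans hk)
  have hquot := (h.quotientMap_commutatorHom_range hgZ).card_commutator_le_pow_choose hp hindex.2
  refine (h.card_commutator_le_pow_choose_succ hp.one_lt hG hgZ hk hquot).trans ?_
  exact Nat.pow_le_pow_right hp.pos (Nat.choose_le_choose 2 (by omega))

theorem commutatorElement_mem_zpowers (h : IsCentralExtension π) {c u : H}
    (hc : π c ∈ Subgroup.center G) (hu : π u ∈ Subgroup.zpowers (π c)) (v : H) :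
    ⁅u, v⁆ ∈ Subgroup.zpowers ⁅c, v⁆ := by
  obtain ⟨k, hk⟩ := hu
  refine ⟨k, ?_⟩
  change ⁅c, v⁆ ^ k = ⁅u, v⁆
  rw [← h.commutatorElement_zpow_left hc]
  exact h.commutatorElement_congr ((map_zpow π c k).trans hk) rfl

theorem commutatorElement_pow_eq_one (h : IsCentralExtension π) {c : H}
    (hc : π c ∈ Subgroup.center G) (hcp : π c ^ p = 1) (v : H) : ⁅c, v⁆ ^ p = 1 := by
  rw [← zpow_natCast, ← h.commutatorElement_zpow_left hc]
  exact h.commutatorElement_eq_one_of_map_eq_one (by rw [zpow_natCast, map_pow, hcp]) v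

open scoped Pointwise

theorem gammaThree_subset_zpowers_mul_zpowers (h : IsCentralExtension π)
    (hG : commutator G ≤ Subgroup.center G) {y z : H}
    (hyz : Subgroup.zpowers (π ⁅y, z⁆) = commutator G) :
    (gammaThree H : Set H) ⊆
      (Subgroup.zpowers ⁅⁅y, z⁆, z⁆ : Set H) * (Subgroup.zpowers ⁅⁅y, z⁆, y⁆ : Set H) := by
  have map_mem {u : H} (hu : u ∈ commutator H) : π u ∈ Subgroup.zpowers (π ⁅y, z⁆) := by
    rw [hyz, ← map_commutator_of_surjective h.surjective]
    exact Subgroup.mem_map_of_mem π hu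
  have hc : π ⁅y, z⁆ ∈ Subgroup.center G := hG (hyz ▸ Subgroup.mem_zpowers _)
  have hrange : gammaThree H ≤ (h.commutatorHom hc).range := by
    refine Subgroup.commutator_le.mpr fun u hu v _ => ?_
    obtain ⟨k, hk⟩ := h.commutatorElement_mem_zpowers hc (map_mem hu) v
    rw [← hk]
    exact zpow_mem (MonoidHom.mem_range.mpr ⟨v, rfl⟩) k
  intro e he
  obtain ⟨x, rfl⟩ := hrange he
  have hmem (a b v : H) : ⁅⁅a, b⁆, v⁆ ∈ Subgroup.zpowers ⁅⁅y, z⁆, v⁆ :=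
    h.commutatorElement_mem_zpowers hc (map_mem (commutatorElement_mem_commutator a b)) v
  refine ⟨⁅⁅x, y⁆, z⁆⁻¹, inv_mem (hmem x y z), ⁅⁅z, x⁆, y⁆⁻¹, inv_mem (hmem z x y), ?_⟩
  change ⁅⁅x, y⁆, z⁆⁻¹ * ⁅⁅z, x⁆, y⁆⁻¹ = ⁅⁅y, z⁆, x⁆
  rw [← mul_inv_rev]
  refine (eq_inv_of_mul_eq_one_left ?_).symm
  rw [← mul_assoc, h.commutatorElement_jacobi hG]

theorem card_gammaThree_le_sq (h : IsCentralExtension π) [hp : Fact p.Prime]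
    [Finite G] (hpG : IsPGroup p G) (hG' : Nat.card (commutator G) = p) :
    Nat.card (gammaThree H) ≤ p ^ 2 := by
  have hcen := le_center_of_card_eq_prime hpG hG'
  obtain ⟨y, z, hyz⟩ : ∃ y z : H, π ⁅y, z⁆ ≠ 1 := by
    by_contra! htriv
    have hbot : commutator G = ⊥ := by
      rw [← map_commutator_of_surjective h.surjective, Subgroup.map_eq_bot_iff, commutator_def,
        Subgroup.commutator_le]
      exact fun a _ b _ => htriv a b
    rw [hbot, Subgroup.card_bot] at hG'
    exact hp.out.one_lt.ne hG'
  have hmem : π ⁅y, z⁆ ∈ commutator G := by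
    rw [map_commutatorElement]
    exact commutatorElement_mem_commutator _ _
  have hone : π ⁅y, z⁆ ^ p = 1 := by
    rw [← hG']
    exact congrArg Subtype.val (pow_card_eq_one' (x := (⟨π ⁅y, z⁆, hmem⟩ : commutator G)))
  have hpow (v : H) := h.commutatorElement_pow_eq_one (hcen hmem) hone v
  have hfin (v : H) : (Subgroup.zpowers ⁅⁅y, z⁆, v⁆ : Set H).Finite :=
    finite_zpowers.mpr (isOfFinOrder_iff_pow_eq_one.mpr ⟨p, hp.out.pos, hpow v⟩)
  have hcard (v : H) : Nat.card (Subgroup.zpowers ⁅⁅y, z⁆, v⁆) ≤ p :=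
    (Nat.card_zpowers _).trans_le (orderOf_le_of_pow_eq_one hp.out.pos (hpow v))
  calc Nat.card (gammaThree H)
      ≤ Nat.card ((Subgroup.zpowers ⁅⁅y, z⁆, z⁆ : Set H) *
          (Subgroup.zpowers ⁅⁅y, z⁆, y⁆ : Set H) : Set H) :=
        Nat.card_mono ((hfin z).mul (hfin y))
          (h.gammaThree_subset_zpowers_mul_zpowers hcen
            (zpowers_eq_of_mem_of_card_eq hG' hmem hyz))
    _ ≤ p * p := Set.natCard_mul_le.trans (Nat.mul_le_mul (hcard z) (hcard y))
    _ = p ^ 2 := (sq p).symm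

theorem finite_commutatorHom_range (h : IsCentralExtension π) [Finite G] {x : H}
    (hx : π x ∈ Subgroup.center G) : Finite (h.commutatorHom hx).range := by
  refine Nat.finite_of_card_ne_zero ?_
  rw [← Subgroup.index_ker]
  have hle : π.ker ≤ (h.commutatorHom hx).ker := fun a ha =>
    h.commutatorElement_eq_one_of_map_mem_commutator hx (by rw [ha]; exact one_mem _)
  have := Subgroup.finiteIndex_of_le hle
  exact Subgroup.FiniteIndex.index_ne_zero

theorem card_gammaThree_le_card_range_mul_sq (h : IsCentralExtension π)
    [hp : Fact p.Prime] [Finite G] (hpG : IsPGroup p G)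
    (hG' : Nat.card (commutator G) = p ^ 2) {x : H}
    (hxZ : π x ∈ Subgroup.center G) (hx : π x ∈ commutator G) (hxo : orderOf (π x) = p) :
    Nat.card (gammaThree H) ≤ Nat.card (h.commutatorHom hxZ).range * p ^ 2 := by
  have : (Subgroup.zpowers (π x)).Normal := normal_of_le_center (Subgroup.zpowers_le.mpr hxZ)
  have hbound := (h.quotientMap_commutatorHom_range hxZ).card_gammaThree_le_sq
    (hpG.to_quotient _) (card_commutator_quotient_zpowers hp.out.pos hG' hx hxo)
  have := h.finite_commutatorHom_range hxZ
  rw [card_eq_card_map_mul_card_ker_inf (QuotientGroup.mk' (h.commutatorHom hxZ).range),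
    map_gammaThree_of_surjective (QuotientGroup.mk'_surjective _),
    QuotientGroup.ker_mk', mul_comm]
  exact Nat.mul_le_mul (Subgroup.card_le_of_le inf_le_left) hbound

end IsCentralExtension

section PGroup

variable {G : Type u} [Group G] [Finite G] {p : ℕ} [hp : Fact p.Prime]

theorem exists_commutatorElement_mem_center_of_not_le_center (hpG : IsPGroup p G)
    (hG' : Nat.card (commutator G) = p ^ 2) (hcen : ¬ commutator G ≤ Subgroup.center G) :
    ∃ t ∈ commutator G, ∃ s : G, ⁅t, s⁆ ∈ Subgroup.center G ∧ orderOf ⁅t, s⁆ = p ∧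
      (Subgroup.centralizer {t}).index ≤ p := by
  obtain ⟨x, hx, hxZ, hxo⟩ := exists_mem_center_orderOf_eq hpG (commutator G)
    fun h => hcen (h ▸ bot_le)
  have hxZ' : Subgroup.zpowers x ≤ Subgroup.center G := Subgroup.zpowers_le.mpr hxZ
  have : (Subgroup.zpowers x).Normal := normal_of_le_center hxZ'
  have hmk : IsCentralExtension (QuotientGroup.mk' (Subgroup.zpowers x)) :=
    ⟨QuotientGroup.mk'_surjective _, by rwa [QuotientGroup.ker_mk']⟩
  obtain ⟨t, ht, htZ⟩ := SetLike.not_le_iff_exists.mp hcen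
  have htZ' : QuotientGroup.mk' (Subgroup.zpowers x) t ∈ Subgroup.center _ := by
    refine le_center_of_card_eq_prime (hpG.to_quotient _)
      (card_commutator_quotient_zpowers hp.out.pos hG' hx hxo) ?_
    rw [← map_commutator_of_surjective hmk.surjective]
    exact Subgroup.mem_map_of_mem _ ht
  have hrange : (hmk.commutatorHom htZ').range ≤ Subgroup.zpowers x := by
    simpa only [QuotientGroup.ker_mk'] using hmk.commutatorHom_range_le_ker htZ'
  obtain ⟨s, hs⟩ : ∃ s : G, ⁅t, s⁆ ≠ 1 := by
    by_contra! htriv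
    exact htZ (Subgroup.mem_center_iff.mpr fun g =>
      (commutatorElement_eq_one_iff_mul_comm.mp (htriv g)).symm)
  have hmem : ⁅t, s⁆ ∈ Subgroup.zpowers x := hrange (MonoidHom.mem_range.mpr ⟨s, rfl⟩)
  refine ⟨t, ht, s, hxZ' hmem, ?_, ?_⟩
  · rw [← Nat.card_zpowers, zpowers_eq_of_mem_of_card_eq (by rw [Nat.card_zpowers, hxo]) hmem hs,
      Nat.card_zpowers, hxo]
  · have hker : (hmk.commutatorHom htZ').ker ≤ Subgroup.centralizer {t} := fun y hy =>
      Subgroup.mem_centralizer_singleton_iff.mpr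
        (commutatorElement_eq_one_iff_mul_comm.mp hy).symm
    calc (Subgroup.centralizer {t}).index
        ≤ (hmk.commutatorHom htZ').ker.index :=
          Nat.le_of_dvd (Nat.pos_of_ne_zero Subgroup.index_ne_zero_of_finite)
            (Subgroup.index_dvd_of_le hker)
      _ = Nat.card (hmk.commutatorHom htZ').range := Subgroup.index_ker _
      _ ≤ Nat.card (Subgroup.zpowers x) := Subgroup.card_le_of_le hrange
      _ = p := by rw [Nat.card_zpowers, hxo]

end PGroup

namespace IsCentralExtension

variable {H : Type u} {G : Type v} [Group H] [Group G] {π : H →* G} {p n : ℕ} {t s : H}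

theorem commutatorElement_eq_one_of_card_commutator_eq_sq (h : IsCentralExtension π)
    [Fact p.Prime] [Finite G] (hG' : Nat.card (commutator G) = p ^ 2)
    (ht : π t ∈ commutator G) (hts : π ⁅t, s⁆ ∈ Subgroup.center G)
    (hord : orderOf (π ⁅t, s⁆) = p) {u : H} (hu : π u ∈ commutator G) : ⁅u, t⁆ = 1 := by
  have mem_iff (y : H) : y ∈ Subgroup.centralizer {t} ↔ ⁅y, t⁆ = 1 := by
    rw [Subgroup.mem_centralizer_singleton_iff, commutatorElement_eq_one_iff_mul_comm]
  have hmem : π ⁅t, s⁆ ∈ commutator G := by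
    rw [map_commutatorElement]
    exact commutatorElement_mem_commutator _ _
  set L := (Subgroup.centralizer {t}).map π ⊓ commutator G
  have htL : π t ∈ L := ⟨Subgroup.mem_map_of_mem π ((mem_iff t).mpr (commutatorElement_self t)), ht⟩
  have hle : Subgroup.zpowers (π ⁅t, s⁆) ≤ L := Subgroup.zpowers_le.mpr
    ⟨Subgroup.mem_map_of_mem π ((mem_iff _).mpr
      (h.commutatorElement_eq_one_of_map_mem_commutator hts ht)), hmem⟩
  have hnot : π t ∉ Subgroup.zpowers (π ⁅t, s⁆) := fun htmem => by
    have htZ : π t ∈ Subgroup.center G := Subgroup.zpowers_le.mpr hts htmem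
    rw [map_commutatorElement_eq_one htZ, orderOf_one] at hord
    exact (Fact.out : p.Prime).ne_one hord.symm
  have hL : L = commutator G := eq_of_lt_of_le_of_card_eq_sq
    (by rw [Nat.card_zpowers, hord]) hG'
    (lt_of_le_of_ne hle fun he => hnot (he ▸ htL)) inf_le_right
  obtain ⟨y, hy, hyu⟩ := (hL.symm.le hu).1
  rw [h.commutatorElement_congr hyu.symm rfl]
  exact (mem_iff y).mp hy

theorem commutatorElement_commutatorElement_eq_one (h : IsCentralExtension π)
    (hts : π ⁅t, s⁆ ∈ Subgroup.center G) (ht : ∀ u, π u ∈ commutator G → ⁅u, t⁆ = 1) {v : H}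
    (hv : ⁅π t, π v⁆ = 1) : ⁅⁅t, s⁆, v⁆ = 1 := by
  have hvt : ⁅π v, π t⁆ = 1 := by rw [← commutatorElement_inv, hv, inv_one]
  have hconj : π (v * t * v⁻¹) = π t := by
    rw [map_mul, map_mul, map_inv, commutatorElement_eq_one_iff_mul_comm.mp hvt,
      mul_inv_cancel_right]
  have hsv : ⁅⁅s, v⁆, v * t * v⁻¹⁆ = 1 := by
    rw [h.commutatorElement_congr rfl hconj]
    refine ht _ ?_
    rw [map_commutatorElement]
    exact commutatorElement_mem_commutator _ _
  have hvts : ⁅⁅v, t⁆, t * s * t⁻¹⁆ = 1 :=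
    h.commutatorElement_eq_one_of_map_eq_one (by rw [map_commutatorElement, hvt]) _
  have hwitt := commutatorElement_commutatorElement_conj_mul t s v
  rwa [hsv, hvts, mul_one, mul_one, h.commutatorElement_conj_right hts] at hwitt

theorem card_gammaThree_le_pow_three_of_not_le_center (h : IsCentralExtension π)
    [hp : Fact p.Prime] [Finite G] (hpG : IsPGroup p G) (hG' : Nat.card (commutator G) = p ^ 2)
    (hcen : ¬ commutator G ≤ Subgroup.center G) : Nat.card (gammaThree H) ≤ p ^ 3 := by
  obtain ⟨t, ht, s, htsZ, hord, hindex⟩ :=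
    exists_commutatorElement_mem_center_of_not_le_center hpG hG' hcen
  obtain ⟨t, rfl⟩ := h.surjective t
  obtain ⟨s, rfl⟩ := h.surjective s
  have hmem := commutatorElement_mem_commutator (π t) (π s)
  rw [← map_commutatorElement] at htsZ hord hmem
  have hrange : Nat.card (h.commutatorHom htsZ).range ≤ p := by
    refine (h.card_commutatorHom_range_le_index htsZ Subgroup.index_ne_zero_of_finite
      fun v hv => ?_).trans hindex
    refine h.commutatorElement_commutatorElement_eq_one htsZ (fun u =>
      h.commutatorElement_eq_one_of_card_commutator_eq_sq hG' ht htsZ hord) ?_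
    exact commutatorElement_eq_one_iff_mul_comm.mpr
      (Subgroup.mem_centralizer_singleton_iff.mp hv).symm
  calc Nat.card (gammaThree H) ≤ Nat.card (h.commutatorHom htsZ).range * p ^ 2 :=
        h.card_gammaThree_le_card_range_mul_sq hpG hG' htsZ hmem hord
    _ ≤ p * p ^ 2 := Nat.mul_le_mul_right _ hrange
    _ = p ^ 3 := (pow_succ' p 2).symm

theorem card_commutator_le_card_gammaThree_mul (h : IsCentralExtension π) (hp : p.Prime)
    (hG : Nat.card G = p ^ n) {k : ℕ} (hG' : Nat.card (commutator G) = p ^ k) :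
    Nat.card (commutator H) ≤ Nat.card (gammaThree H) * p ^ (n - k).choose 2 := by
  obtain ⟨-, hindex⟩ := index_eq_pow_sub hp.one_lt hG hG'
  rw [card_commutator_eq_card_mul (gammaThree_le_commutator H)]
  exact Nat.mul_le_mul_left _
    (h.quotientMap_gammaThree.card_commutator_le_pow_choose hp hindex)

theorem card_commutator_le_card_gammaThree_mul_of_pow_notMem (h : IsCentralExtension π)
    (hp : p.Prime) (hG : Nat.card G = p ^ n) {k : ℕ} (hG' : Nat.card (commutator G) = p ^ k)
    {g : G} (hg : g ^ p ∉ commutator G) :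
    Nat.card (commutator H) ≤ Nat.card (gammaThree H) * p ^ (n - k - 1).choose 2 := by
  obtain ⟨-, hindex⟩ := index_eq_pow_sub hp.one_lt hG hG'
  rw [card_commutator_eq_card_mul (gammaThree_le_commutator H)]
  refine Nat.mul_le_mul_left _ (h.quotientMap_gammaThree.card_commutator_le_pow_choose_of_pow_ne_one
    hp hindex (g := QuotientGroup.mk' (commutator G) g) ?_ ?_)
  · refine Subgroup.mem_center_iff.mpr fun y => ?_
    exact mul_comm (G := Abelianization G) _ _
  · rw [← map_pow]
    exact fun h1 => hg ((QuotientGroup.eq_one_iff _).mp h1)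

theorem pow_le_card_gammaThree (h : IsCentralExtension π) (hp : p.Prime)
    (hG : Nat.card G = p ^ n) (hn : 2 ≤ n) (hG' : Nat.card (commutator G) = p ^ 2)
    (hH : Nat.card (commutator H) = p ^ ((n - 1).choose 2 + 1)) :
    p ^ (n - 1) ≤ Nat.card (gammaThree H) := by
  have hle := h.card_commutator_le_card_gammaThree_mul hp hG hG'
  have hchoose : (n - 1).choose 2 + 1 = n - 1 + (n - 2).choose 2 := by
    obtain ⟨m, rfl⟩ := Nat.exists_eq_add_of_le' hn
    simp only [Nat.add_one_sub_one, Nat.choose_succ_succ', Nat.choose_one_right, Nat.reduceAdd,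
      Nat.add_sub_cancel]
    omega
  rw [hH, hchoose, pow_add] at hle
  exact Nat.le_of_mul_le_mul_right hle (pow_pos hp.pos _)

theorem commutator_le_center_of_card_commutator_eq (h : IsCentralExtension π)
    [hp : Fact p.Prime] (hG : Nat.card G = p ^ n) (hn : 5 ≤ n)
    (hG' : Nat.card (commutator G) = p ^ 2)
    (hH : Nat.card (commutator H) = p ^ ((n - 1).choose 2 + 1)) :
    commutator G ≤ Subgroup.center G := by
  have : Finite G := Nat.finite_of_card_ne_zero (by rw [hG]; exact (pow_pos hp.out.pos _).ne')
  by_contra hcen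
  have hle := (h.pow_le_card_gammaThree hp.out hG (by omega) hG' hH).trans
    (h.card_gammaThree_le_pow_three_of_not_le_center (IsPGroup.of_card hG) hG' hcen)
  have := (Nat.pow_le_pow_iff_right hp.out.one_lt).mp hle
  omega

theorem pow_mem_commutator_of_card_commutator_eq (h : IsCentralExtension π)
    [hp : Fact p.Prime] (hG : Nat.card G = p ^ n) (hn : 5 ≤ n)
    (hG' : Nat.card (commutator G) = p ^ 2)
    (hH : Nat.card (commutator H) = p ^ ((n - 1).choose 2 + 1)) (g : G) :
    g ^ p ∈ commutator G := by
  have : Finite G := Nat.finite_of_card_ne_zero (by rw [hG]; exact (pow_pos hp.out.pos _).ne')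
  have hne : commutator G ≠ ⊥ := fun h0 =>
    (Nat.one_lt_pow two_ne_zero hp.out.one_lt).ne (by simpa [h0] using hG')
  obtain ⟨x, hxG', hxZ, hxo⟩ := exists_mem_center_orderOf_eq (IsPGroup.of_card hG) _ hne
  obtain ⟨x, rfl⟩ := h.surjective x
  have hrange : Nat.card (h.commutatorHom hxZ).range ≤ p ^ (n - 2) :=
    (h.card_commutatorHom_range_le_index hxZ Subgroup.index_ne_zero_of_finite fun _ =>
      h.commutatorElement_eq_one_of_map_mem_commutator hxZ).trans_eq
      (index_eq_pow_sub hp.out.one_lt hG hG').2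
  by_contra hg
  have hle : p ^ ((n - 1).choose 2 + 1) ≤ p ^ (n - 2 + 2 + (n - 3).choose 2) := calc
    p ^ ((n - 1).choose 2 + 1) = Nat.card (commutator H) := hH.symm
    _ ≤ Nat.card (gammaThree H) * p ^ (n - 3).choose 2 :=
      h.card_commutator_le_card_gammaThree_mul_of_pow_notMem hp.out hG hG' hg
    _ ≤ p ^ (n - 2) * p ^ 2 * p ^ (n - 3).choose 2 := Nat.mul_le_mul_right _
      ((h.card_gammaThree_le_card_range_mul_sq (IsPGroup.of_card hG) hG' hxZ hxG' hxo).trans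
        (Nat.mul_le_mul_right _ hrange))
    _ = p ^ (n - 2 + 2 + (n - 3).choose 2) := by rw [pow_add, pow_add]
  have hexp := (Nat.pow_le_pow_iff_right hp.out.one_lt).mp hle
  obtain ⟨m, rfl⟩ := Nat.exists_eq_add_of_le' (show 3 ≤ n by omega)
  simp only [Nat.choose_succ_succ', Nat.choose_one_right, Nat.choose_zero_right,
    Nat.add_one_sub_one, Nat.reduceAdd, Nat.reduceSubDiff, Nat.add_sub_cancel] at hexp
  omega

end IsCentralExtension

/-! ### The Jacobi identity for bilinear forms -/

section JacobiPair

variable {F : Type*} {V : Type*} {W : Type*} {P : Type*} [Field F] [AddCommGroup V] [Module F V]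
  [AddCommGroup W] [Module F W] [AddCommGroup P] [Module F P]

theorem exists_dual_apply_eq_mul (β : V →ₗ[F] W →ₗ[F] P) [FiniteDimensional F V]
    (hW : Module.finrank F W = 2) (hP : Module.finrank F V < Module.finrank F P)
    {l : W →ₗ[F] F} (hl : l ≠ 0) :
    ∃ φ : P →ₗ[F] F, φ ≠ 0 ∧ ∃ g : V → F, ∀ v w, φ (β v w) = g v * l w := by
  have : FiniteDimensional F W := Module.finite_of_finrank_eq_succ hW
  have hsurj : Function.Surjective l := LinearMap.surjective hl
  obtain ⟨w₂, hw₂⟩ := hsurj 1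
  have hker : Module.finrank F (LinearMap.ker l) ≤ 1 := by
    have hrank := LinearMap.finrank_range_add_finrank_ker l
    rw [LinearMap.range_eq_top.mpr hsurj, finrank_top, Module.finrank_self] at hrank
    omega
  obtain ⟨w₁, hw₁⟩ := finrank_le_one_iff.mp hker
  have hlt : LinearMap.range (β.flip (w₁ : W)) < ⊤ := by
    refine lt_top_iff_ne_top.mpr fun htop => hP.not_ge ?_
    rw [← finrank_top F P, ← htop]
    exact LinearMap.finrank_range_le _
  obtain ⟨φ, hφ, hφβ⟩ := Submodule.exists_le_ker_of_lt_top _ hlt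
  refine ⟨φ, hφ, fun v => φ (β v w₂), fun v w => ?_⟩
  obtain ⟨c, hc⟩ := hw₁ ⟨w - l w • w₂, by simp [hw₂]⟩
  have hw : w = c • (w₁ : W) + l w • w₂ := eq_add_of_sub_eq (congrArg Subtype.val hc).symm
  have hφ₁ : φ (β v w₁) = 0 := hφβ ⟨v, rfl⟩
  conv_lhs => rw [hw]
  simp [hφ₁, mul_comm]

theorem eq_zero_of_not_linearIndependent_pair {e₁ e₂ w : W} (h : LinearIndependent F ![e₁, e₂])
    (h₁ : ¬ LinearIndependent F ![e₁, w]) (h₂ : ¬ LinearIndependent F ![e₂, w]) : w = 0 := by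
  have he₁ : e₁ ≠ 0 := h.ne_zero 0
  have he₂ : e₂ ≠ 0 := h.ne_zero 1
  rw [LinearIndependent.pair_iff' he₁] at h₁
  rw [LinearIndependent.pair_iff' he₂] at h₂
  push Not at h₁ h₂
  obtain ⟨s, rfl⟩ := h₁
  obtain ⟨t, ht⟩ := h₂
  have hst := LinearIndependent.pair_iff.mp h s (-t) (by rw [neg_smul, ht, add_neg_cancel])
  rw [hst.1, zero_smul]

theorem exists_linearIndependent_pair_of_span_eq_top {S : Set W} (hS : Submodule.span F S = ⊤)
    (hW : 1 < Module.finrank F W) : ∃ e₁ ∈ S, ∃ e₂ ∈ S, LinearIndependent F ![e₁, e₂] := by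
  obtain ⟨e₁, he₁, h0⟩ : ∃ e ∈ S, e ≠ 0 := by
    by_contra! h0
    have hbot : Submodule.span F S = ⊥ := Submodule.span_eq_bot.mpr h0
    rw [← finrank_top, ← hS, hbot, finrank_bot] at hW
    exact absurd hW (by norm_num)
  refine ⟨e₁, he₁, ?_⟩
  by_contra! hdep
  have hle : Submodule.span F S ≤ Submodule.span F {e₁} := Submodule.span_le.mpr fun e he => by
    have hdep := hdep e he
    rw [LinearIndependent.pair_iff' h0] at hdep
    push Not at hdep
    exact Submodule.mem_span_singleton.mpr hdep
  rw [← finrank_top, ← top_le_iff.mp (hS ▸ hle), finrank_span_singleton h0] at hW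
  exact lt_irrefl _ hW

theorem exists_linearIndependent_apply {ω : V →ₗ[F] V →ₗ[F] W} (hω : ω.IsAlt)
    (hspan : Submodule.span F {w | ∃ u v, ω u v = w} = ⊤) (hW : 1 < Module.finrank F W) :
    ∃ a b₁ b₂ : V, LinearIndependent F ![ω a b₁, ω a b₂] := by
  obtain ⟨_, ⟨x, y, rfl⟩, _, ⟨u, v, rfl⟩, hind⟩ :=
    exists_linearIndependent_pair_of_span_eq_top hspan hW
  by_contra! hdep
  have hdep' (a b₁ b₂ : V) : ¬ LinearIndependent F ![ω b₁ a, ω a b₂] := by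
    rw [← hω.neg, ← LinearIndependent.pair_neg_left_iff, neg_neg]
    exact hdep a b₁ b₂
  have hxv : ω x v = 0 := eq_zero_of_not_linearIndependent_pair hind (hdep x y v) fun h =>
    hdep' v u x (by rwa [← hω.neg x v, LinearIndependent.pair_neg_right_iff])
  have huy : ω u y = 0 := eq_zero_of_not_linearIndependent_pair hind (fun h =>
    hdep' y x u (by rwa [← hω.neg u y, LinearIndependent.pair_neg_right_iff])) (hdep u v y)
  refine hdep (x + u) y v ?_
  simpa [hxv, huy] using hind

theorem exists_dual_pair {c₁ c₂ : W} (hW : Module.finrank F W = 2)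
    (hc : LinearIndependent F ![c₁, c₂]) :
    ∃ l₁ l₂ : W →ₗ[F] F, (l₁ c₁ = 1 ∧ l₁ c₂ = 0) ∧ (l₂ c₁ = 0 ∧ l₂ c₂ = 1) ∧
      ∀ w, l₁ w • c₁ + l₂ w • c₂ = w := by
  let B := basisOfLinearIndependentOfCardEqFinrank hc (by simp [hW])
  have hB₁ : B 0 = c₁ := by simp [B]
  have hB₂ : B 1 = c₂ := by simp [B]
  refine ⟨B.coord 0, B.coord 1, ?_, ?_, fun w => ?_⟩
  · simp [← hB₁, ← hB₂]
  · simp [← hB₁, ← hB₂]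
  · have hsum := B.sum_repr w
    rwa [Fin.sum_univ_two, hB₁, hB₂] at hsum

/-- The linear data of a group of class two with a central extension: `ω` is the commutator form
`V × V → G'` of the group and `β` the form `V × G' → γ₃` of triple commutators in the extension,
related by the Jacobi identity. -/
structure IsJacobiPair (ω : V →ₗ[F] V →ₗ[F] W) (β : V →ₗ[F] W →ₗ[F] P) : Prop where
  isAlt : ω.IsAlt
  span_left : Submodule.span F {w | ∃ u v, ω u v = w} = ⊤
  span_right : Submodule.span F {t | ∃ v w, β v w = t} = ⊤
  jacobi : ∀ x y z, β x (ω y z) + β y (ω z x) + β z (ω x y) = 0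

/-- A frame adapted to an alternating map `ω` of rank three with two-dimensional target: modulo the
kernel of `ω`, the only nonzero values on the frame are the independent `ω a b₁` and `ω a b₂`. -/
structure IsAdaptedFrame (ω : V →ₗ[F] V →ₗ[F] W) (a b₁ b₂ : V) : Prop where
  apply_eq_zero : ω b₁ b₂ = 0
  linearIndependent : LinearIndependent F ![ω a b₁, ω a b₂]
  span_sup_ker : Submodule.span F {a, b₁, b₂} ⊔ LinearMap.ker ω = ⊤

variable {ω : V →ₗ[F] V →ₗ[F] W} {β : V →ₗ[F] W →ₗ[F] P}

namespace IsJacobiPair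

theorem exists_comp_eq_mul_sub_mul (h : IsJacobiPair ω β) [FiniteDimensional F V]
    (hW : Module.finrank F W = 2) (hP : Module.finrank F V < Module.finrank F P) (l : W →ₗ[F] F) :
    ∃ g q : V → F, ∀ x y, l (ω x y) = g x * q y - g y * q x := by
  rcases eq_or_ne l 0 with rfl | hl
  · exact ⟨0, 0, by simp⟩
  obtain ⟨φ, hφ, g, hg⟩ := exists_dual_apply_eq_mul β hW hP hl
  obtain ⟨x₀, hx₀⟩ : ∃ x₀, g x₀ ≠ 0 := by
    by_contra! hzero
    refine hφ (LinearMap.ext_on h.span_right ?_)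
    rintro _ ⟨v, w, rfl⟩
    simp [hg, hzero]
  refine ⟨g, fun y => l (ω x₀ y) / g x₀, fun x y => ?_⟩
  have hjac := congrArg φ (h.jacobi x₀ x y)
  rw [← h.isAlt.neg x₀ y] at hjac
  simp only [map_add, map_neg, hg, map_zero] at hjac
  field_simp
  linear_combination hjac

theorem plucker (h : IsJacobiPair ω β) [FiniteDimensional F V] (hW : Module.finrank F W = 2)
    (hP : Module.finrank F V < Module.finrank F P) (l : W →ₗ[F] F) (x y z t : V) :
    l (ω x y) * l (ω z t) - l (ω x z) * l (ω y t) + l (ω x t) * l (ω y z) = 0 := by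
  obtain ⟨g, q, hgq⟩ := h.exists_comp_eq_mul_sub_mul hW hP l
  simp only [hgq]
  ring

theorem exists_apply_eq_zero_and_linearIndependent (h : IsJacobiPair ω β)
    (hW : Module.finrank F W = 2) :
    ∃ a b₁ b₂ : V, ω b₁ b₂ = 0 ∧ LinearIndependent F ![ω a b₁, ω a b₂] := by
  obtain ⟨a, b₁, b₂, hind⟩ := exists_linearIndependent_apply h.isAlt h.span_left (by omega)
  obtain ⟨l₁, l₂, -, -, hl⟩ := exists_dual_pair hW hind
  refine ⟨a, b₁ - l₂ (ω b₁ b₂) • a, b₂ + l₁ (ω b₁ b₂) • a, ?_, ?_⟩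
  · have hneg := h.isAlt.neg a b₁
    simp only [map_add, map_sub, map_smul, LinearMap.sub_apply, LinearMap.smul_apply,
      h.isAlt.self_eq_zero, ← hneg, smul_zero]
    nth_rw 1 [← hl (ω b₁ b₂)]
    module
  · simpa [h.isAlt.self_eq_zero] using hind

theorem apply_eq_zero_of_apply_frame_eq_zero (h : IsJacobiPair ω β) [FiniteDimensional F V]
    (hW : Module.finrank F W = 2) (hP : Module.finrank F V < Module.finrank F P) {a b₁ b₂ : V}
    (hind : LinearIndependent F ![ω a b₁, ω a b₂]) {r s : V}
    (hr : ω a r = 0 ∧ ω b₁ r = 0 ∧ ω b₂ r = 0)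
    (hs : ω a s = 0 ∧ ω b₁ s = 0 ∧ ω b₂ s = 0) : ω r s = 0 := by
  obtain ⟨l₁, l₂, ⟨h₁₁, -⟩, ⟨-, h₂₂⟩, hl⟩ := exists_dual_pair hW hind
  have hrs₁ := h.plucker hW hP l₁ a b₁ r s
  have hrs₂ := h.plucker hW hP l₂ a b₂ r s
  simp only [hr, hs, h₁₁, h₂₂, map_zero, one_mul, zero_mul, sub_zero, add_zero] at hrs₁ hrs₂
  rw [← hl (ω r s), hrs₁, hrs₂, zero_smul, zero_smul, add_zero]

theorem exists_eq_frame_add (h : IsJacobiPair ω β) [FiniteDimensional F V]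
    (hW : Module.finrank F W = 2) (hP : Module.finrank F V < Module.finrank F P) {a b₁ b₂ : V}
    (hb : ω b₁ b₂ = 0) (hind : LinearIndependent F ![ω a b₁, ω a b₂]) (v : V) :
    ∃ (x y z : F) (r : V), x • a + y • b₁ + z • b₂ + r = v ∧
      ω a r = 0 ∧ ω b₁ r = 0 ∧ ω b₂ r = 0 := by
  obtain ⟨l₁, l₂, ⟨h₁₁, h₁₂⟩, ⟨h₂₁, h₂₂⟩, hl⟩ := exists_dual_pair hW hind
  obtain ⟨s, hs⟩ : ∃ s, s = v - l₁ (ω a v) • b₁ - l₂ (ω a v) • b₂ := ⟨_, rfl⟩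
  have has : ω a s = 0 := by
    rw [hs, map_sub, map_sub, map_smul, map_smul, sub_sub, hl, sub_self]
  have hpl (l : W →ₗ[F] F) := h.plucker hW hP l a b₁ b₂ s
  have hpl₁ := hpl l₁
  have hpl₂ := hpl l₂
  have hpl₁₂ := hpl (l₁ + l₂)
  simp only [LinearMap.add_apply, has, hb, h₁₁, h₁₂, h₂₁, h₂₂, map_zero, one_mul, zero_mul,
    add_zero, zero_add, sub_zero, zero_sub, neg_eq_zero] at hpl₁ hpl₂ hpl₁₂
  rw [hpl₁, hpl₂, zero_add, add_zero, sub_eq_zero] at hpl₁₂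
  have hs₁ : ω b₁ s = l₁ (ω b₁ s) • ω a b₁ := by
    rw [← hl (ω b₁ s), hpl₂, zero_smul, add_zero, map_smul, h₁₁, smul_eq_mul, mul_one]
  have hs₂ : ω b₂ s = l₁ (ω b₁ s) • ω a b₂ := by
    rw [← hl (ω b₂ s), hpl₁, zero_smul, zero_add, hpl₁₂]
  refine ⟨-l₁ (ω b₁ s), l₁ (ω a v), l₂ (ω a v), s + l₁ (ω b₁ s) • a, ?_, ?_, ?_, ?_⟩
  · rw [hs]
    module
  · rw [map_add, map_smul, h.isAlt.self_eq_zero, has, smul_zero, add_zero]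
  · rw [map_add, map_smul, ← h.isAlt.neg a b₁, smul_neg, ← sub_eq_add_neg, sub_eq_zero]
    exact hs₁
  · rw [map_add, map_smul, ← h.isAlt.neg a b₂, smul_neg, ← sub_eq_add_neg, sub_eq_zero]
    exact hs₂

theorem exists_isAdaptedFrame (h : IsJacobiPair ω β) [FiniteDimensional F V]
    (hW : Module.finrank F W = 2) (hP : Module.finrank F V < Module.finrank F P) :
    ∃ a b₁ b₂ : V, IsAdaptedFrame ω a b₁ b₂ := by
  obtain ⟨a, b₁, b₂, hb, hind⟩ := h.exists_apply_eq_zero_and_linearIndependent hW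
  have hdec := h.exists_eq_frame_add hW hP hb hind
  refine ⟨a, b₁, b₂, hb, hind, Submodule.eq_top_iff'.mpr fun v => ?_⟩
  obtain ⟨x, y, z, r, rfl, hr⟩ := hdec v
  refine add_mem (Submodule.mem_sup_left (Submodule.mem_span_triple.mpr ⟨x, y, z, rfl⟩))
    (Submodule.mem_sup_right (LinearMap.ext fun u => ?_))
  obtain ⟨x', y', z', s, rfl, hs⟩ := hdec u
  have hrs := h.apply_eq_zero_of_apply_frame_eq_zero hW hP hind hr hs
  simp only [map_add, map_smul, hrs, h.isAlt.eq_iff.mp hr.1, h.isAlt.eq_iff.mp hr.2.1,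
    h.isAlt.eq_iff.mp hr.2.2, smul_zero, add_zero, LinearMap.zero_apply]

end IsJacobiPair

namespace IsAdaptedFrame

variable {a b₁ b₂ : V}

theorem exists_eq_add (hf : IsAdaptedFrame ω a b₁ b₂) (v : V) :
    ∃ x y z : F, ∃ r ∈ LinearMap.ker ω, x • a + y • b₁ + z • b₂ + r = v := by
  have hv : v ∈ Submodule.span F {a, b₁, b₂} ⊔ LinearMap.ker ω :=
    hf.span_sup_ker ▸ Submodule.mem_top
  obtain ⟨u, hu, r, hr, rfl⟩ := Submodule.mem_sup.mp hv
  obtain ⟨x, y, z, rfl⟩ := Submodule.mem_span_triple.mp hu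
  exact ⟨x, y, z, r, hr, rfl⟩

theorem exists_eq_smul_add_smul (hf : IsAdaptedFrame ω a b₁ b₂) (hW : Module.finrank F W = 2)
    (w : W) : ∃ m n : F, m • ω a b₁ + n • ω a b₂ = w := by
  obtain ⟨l₁, l₂, -, -, hl⟩ := exists_dual_pair hW hf.linearIndependent
  exact ⟨l₁ w, l₂ w, hl w⟩

theorem linearIndependent_comp (hf : IsAdaptedFrame ω a b₁ b₂) (hω : ω.IsAlt) :
    LinearIndependent F (ω ∘ ![a, b₁, b₂]) := by
  refine Fintype.linearIndependent_iff.mpr fun k hk => ?_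
  have hk_apply (v : V) : k 0 • ω a v + k 1 • ω b₁ v + k 2 • ω b₂ v = 0 := by
    simpa [Fin.sum_univ_three] using LinearMap.congr_fun hk v
  have hk₀ : k 0 = 0 := by
    have hb := hk_apply b₁
    rw [hω.self_eq_zero, hω.eq_iff.mp hf.apply_eq_zero, smul_zero, smul_zero, add_zero,
      add_zero] at hb
    exact (smul_eq_zero.mp hb).resolve_right (hf.linearIndependent.ne_zero 0)
  have hk₁₂ : k 1 = 0 ∧ k 2 = 0 := by
    have ha := hk_apply a
    rw [hω.self_eq_zero, smul_zero, zero_add, ← hω.neg a b₁, ← hω.neg a b₂] at ha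
    refine LinearIndependent.pair_iff.mp hf.linearIndependent _ _ ?_
    rwa [smul_neg, smul_neg, ← neg_add, neg_eq_zero] at ha
  exact Fin.forall_fin_succ.mpr ⟨hk₀, Fin.forall_fin_two.mpr hk₁₂⟩

theorem finrank_eq (hf : IsAdaptedFrame ω a b₁ b₂) (hω : ω.IsAlt) [FiniteDimensional F V] :
    Module.finrank F V = 3 + Module.finrank F (LinearMap.ker ω) := by
  have hind := hf.linearIndependent_comp hω
  have hrange : Set.range ![a, b₁, b₂] = {a, b₁, b₂} := by
    rw [Matrix.range_cons, Matrix.range_cons_cons_empty, Set.singleton_union]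
  have hsum := Submodule.finrank_sup_add_finrank_inf_eq (Submodule.span F {a, b₁, b₂})
    (LinearMap.ker ω)
  rw [hf.span_sup_ker, finrank_top, ← hrange, (Submodule.range_ker_disjoint hind).eq_bot,
    finrank_bot, finrank_span_eq_card (hind.of_comp ω), Fintype.card_fin] at hsum
  exact hsum

theorem span_eq_top_or_exists_span_eq_top (hf : IsAdaptedFrame ω a b₁ b₂) (hω : ω.IsAlt)
    [FiniteDimensional F V] (hker : Module.finrank F (LinearMap.ker ω) ≤ 1) :
    (Module.finrank F V = 3 ∧ Submodule.span F {a, b₁, b₂} = ⊤) ∨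
      (Module.finrank F V = 4 ∧ ∃ r ∈ LinearMap.ker ω, Submodule.span F {r, a, b₁, b₂} = ⊤) := by
  rw [hf.finrank_eq hω]
  rcases Nat.le_one_iff_eq_zero_or_eq_one.mp hker with h0 | h1
  · refine Or.inl ⟨by rw [h0], ?_⟩
    rw [← hf.span_sup_ker, Submodule.finrank_eq_zero.mp h0, sup_bot_eq]
  · refine Or.inr ⟨by rw [h1], ?_⟩
    obtain ⟨r, hr⟩ := finrank_le_one_iff.mp hker
    refine ⟨r, r.2, ?_⟩
    rw [Submodule.span_insert, sup_comm, eq_top_iff, ← hf.span_sup_ker]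
    refine sup_le_sup_left (fun v hv => ?_) _
    obtain ⟨c, hc⟩ := hr ⟨v, hv⟩
    exact Submodule.mem_span_singleton.mpr ⟨c, congrArg Subtype.val hc⟩

end IsAdaptedFrame

/-- Five values of `β` on an adapted frame; they span the target of a Jacobi pair. -/
def frameTriples (ω : V →ₗ[F] V →ₗ[F] W) (β : V →ₗ[F] W →ₗ[F] P) (a b₁ b₂ : V) : Fin 5 → P :=
  ![β a (ω a b₁), β a (ω a b₂), β b₁ (ω a b₁), β b₁ (ω a b₂), β b₂ (ω a b₂)]

/-- The space of linear relations between the `frameTriples`. -/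
def frameRelations (ω : V →ₗ[F] V →ₗ[F] W) (β : V →ₗ[F] W →ₗ[F] P) (a b₁ b₂ : V) :
    Submodule F (Fin 5 → F) :=
  LinearMap.ker (Fintype.linearCombination F (frameTriples ω β a b₁ b₂))

/-- The coordinates of `β (x • a + y • b₁ + z • b₂) (m • ω a b₁ + n • ω a b₂)` with respect to
`frameTriples`. -/
def tripleCoords (x y z m n : F) : Fin 5 → F :=
  ![x * m, x * n, y * m, y * n + z * m, z * n]

theorem mul_apply_comm_of_finrank_le_one {ι : Type*} [Finite ι] {S : Submodule F (ι → F)}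
    (hS : Module.finrank F S ≤ 1) {k k' : ι → F} (hk : k ∈ S) (hk' : k' ∈ S) (i j : ι) :
    k i * k' j = k j * k' i := by
  obtain ⟨e, he⟩ := finrank_le_one_iff.mp hS
  obtain ⟨s, hs⟩ := he ⟨k, hk⟩
  obtain ⟨t, ht⟩ := he ⟨k', hk'⟩
  have hs' : s • (e : ι → F) = k := congrArg Subtype.val hs
  have ht' : t • (e : ι → F) = k' := congrArg Subtype.val ht
  rw [← hs', ← ht']
  simp only [Pi.smul_apply, smul_eq_mul]
  ring

namespace IsJacobiPair

variable {a b₁ b₂ : V}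

theorem apply_eq_zero_of_mem_ker (h : IsJacobiPair ω β) (hf : IsAdaptedFrame ω a b₁ b₂)
    (hW : Module.finrank F W = 2) {r : V} (hr : r ∈ LinearMap.ker ω) : β r = 0 := by
  have hrv (v : V) : ω r v = 0 := LinearMap.congr_fun hr v
  have hβ (v : V) : β r (ω a v) = 0 := by
    have hjac := h.jacobi r a v
    rwa [h.isAlt.eq_iff.mp (hrv v), hrv, map_zero, map_zero, add_zero, add_zero] at hjac
  ext w
  obtain ⟨m, n, rfl⟩ := hf.exists_eq_smul_add_smul hW w
  simp [hβ]

theorem apply_right_left_eq (h : IsJacobiPair ω β) (hf : IsAdaptedFrame ω a b₁ b₂) :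
    β b₂ (ω a b₁) = β b₁ (ω a b₂) := by
  have hjac := h.jacobi a b₁ b₂
  rw [hf.apply_eq_zero, ← h.isAlt.neg a b₂, map_zero, zero_add, map_neg] at hjac
  exact (neg_add_eq_zero.mp hjac).symm

theorem apply_eq_linearCombination (h : IsJacobiPair ω β) (hf : IsAdaptedFrame ω a b₁ b₂)
    (hW : Module.finrank F W = 2) (x y z m n : F) {r : V} (hr : r ∈ LinearMap.ker ω) :
    β (x • a + y • b₁ + z • b₂ + r) (m • ω a b₁ + n • ω a b₂) =
      Fintype.linearCombination F (frameTriples ω β a b₁ b₂) (tripleCoords x y z m n) := by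
  simp only [map_add, map_smul, LinearMap.add_apply, LinearMap.smul_apply,
    h.apply_eq_zero_of_mem_ker hf hW hr, h.apply_right_left_eq hf, LinearMap.zero_apply,
    Fintype.linearCombination_apply, Fin.sum_univ_five, frameTriples, tripleCoords, Matrix.cons_val]
  module

theorem range_linearCombination_frameTriples (h : IsJacobiPair ω β)
    (hf : IsAdaptedFrame ω a b₁ b₂) (hW : Module.finrank F W = 2) :
    LinearMap.range (Fintype.linearCombination F (frameTriples ω β a b₁ b₂)) = ⊤ := by
  rw [eq_top_iff, ← h.span_right, Submodule.span_le]
  rintro _ ⟨v, w, rfl⟩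
  obtain ⟨x, y, z, r, hr, rfl⟩ := hf.exists_eq_add v
  obtain ⟨m, n, rfl⟩ := hf.exists_eq_smul_add_smul hW w
  exact ⟨_, (h.apply_eq_linearCombination hf hW x y z m n hr).symm⟩

theorem finrank_add_finrank_frameRelations (h : IsJacobiPair ω β)
    (hf : IsAdaptedFrame ω a b₁ b₂) (hW : Module.finrank F W = 2) :
    Module.finrank F P + Module.finrank F (frameRelations ω β a b₁ b₂) = 5 := by
  have hrank := LinearMap.finrank_range_add_finrank_ker
    (Fintype.linearCombination F (frameTriples ω β a b₁ b₂))
  rwa [h.range_linearCombination_frameTriples hf hW, finrank_top, Module.finrank_fin_fun] at hrank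

theorem finrank_ker_le_one (h : IsJacobiPair ω β) [FiniteDimensional F V]
    (hf : IsAdaptedFrame ω a b₁ b₂) (hW : Module.finrank F W = 2)
    (hP : Module.finrank F V < Module.finrank F P) : Module.finrank F (LinearMap.ker ω) ≤ 1 := by
  have hV := hf.finrank_eq h.isAlt
  have hfive := h.finrank_add_finrank_frameRelations hf hW
  omega

theorem mul_apply_comm_of_mem_frameRelations (h : IsJacobiPair ω β) [FiniteDimensional F V]
    (hf : IsAdaptedFrame ω a b₁ b₂) (hW : Module.finrank F W = 2)
    (hP : Module.finrank F V < Module.finrank F P) {k k' : Fin 5 → F}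
    (hk : k ∈ frameRelations ω β a b₁ b₂) (hk' : k' ∈ frameRelations ω β a b₁ b₂) (i j : Fin 5) :
    k i * k' j = k j * k' i := by
  refine mul_apply_comm_of_finrank_le_one ?_ hk hk' i j
  have hV := hf.finrank_eq h.isAlt
  have hfive := h.finrank_add_finrank_frameRelations hf hW
  omega

end IsJacobiPair

/-- The linear data of the `p`-th power map `f : V → G'` of a group of class two: `ω` and `β` are as
in `IsJacobiPair`, and `ε` stands for the binomial coefficient `p.choose 2`. -/
structure IsPowerMap (ω : V →ₗ[F] V →ₗ[F] W) (β : V →ₗ[F] W →ₗ[F] P) (ε : F) (f : V → W) :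
    Prop where
  map_add : ∀ u v, f (u + v) = f u + f v + ε • ω v u
  apply_self : ∀ v, β v (f v) = 0

namespace IsPowerMap

variable {ε : F} {f : V → W} {a b₁ b₂ : V}

theorem tripleCoords_mem_frameRelations (hpow : IsPowerMap ω β ε f) (h : IsJacobiPair ω β)
    (hf : IsAdaptedFrame ω a b₁ b₂) (hW : Module.finrank F W = 2) {x y z m n : F} {r : V}
    (hr : r ∈ LinearMap.ker ω) (hfv : f (x • a + y • b₁ + z • b₂ + r) = m • ω a b₁ + n • ω a b₂) :
    tripleCoords x y z m n ∈ frameRelations ω β a b₁ b₂ := by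
  rw [frameRelations, LinearMap.mem_ker, ← h.apply_eq_linearCombination hf hW x y z m n hr, ← hfv]
  exact hpow.apply_self _

theorem apply_right_eq_zero (hpow : IsPowerMap ω β ε f) (h : IsJacobiPair ω β)
    [FiniteDimensional F V] (hf : IsAdaptedFrame ω a b₁ b₂) (hW : Module.finrank F W = 2)
    (hP : Module.finrank F V < Module.finrank F P) : f b₁ = 0 ∧ f b₂ = 0 := by
  obtain ⟨x, y, hxy⟩ := hf.exists_eq_smul_add_smul hW (f b₁)
  obtain ⟨z, w, hzw⟩ := hf.exists_eq_smul_add_smul hW (f b₂)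
  have hk₁ : tripleCoords 0 1 0 x y ∈ frameRelations ω β a b₁ b₂ :=
    hpow.tripleCoords_mem_frameRelations h hf hW (zero_mem _) (by simp [hxy])
  have hk₂ : tripleCoords 0 0 1 z w ∈ frameRelations ω β a b₁ b₂ :=
    hpow.tripleCoords_mem_frameRelations h hf hW (zero_mem _) (by simp [hzw])
  have hk₁₂ : tripleCoords 0 1 1 (x + z) (y + w) ∈ frameRelations ω β a b₁ b₂ := by
    refine hpow.tripleCoords_mem_frameRelations h hf hW (zero_mem _) ?_
    rw [zero_smul, one_smul, one_smul, zero_add, add_zero, hpow.map_add,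
      h.isAlt.eq_iff.mp hf.apply_eq_zero, ← hxy, ← hzw]
    module
  have hprop {k k'} := h.mul_apply_comm_of_mem_frameRelations hf hW hP (k := k) (k' := k')
  have hyw : y * w = 0 := by simpa [tripleCoords] using hprop hk₁ hk₂ 3 4
  have hy : y = 0 := by simpa [tripleCoords, mul_add, hyw] using hprop hk₁ hk₁₂ 3 4
  have hxz : x * z = 0 := by simpa [tripleCoords] using hprop hk₁ hk₂ 2 3
  have hxw : x * w = 0 := by simpa [tripleCoords] using hprop hk₁ hk₂ 2 4
  have hx : x = 0 := by simpa [tripleCoords, mul_add, hy, hxz, hxw] using hprop hk₁ hk₁₂ 2 3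
  have hz : z = 0 := by simpa [tripleCoords, hx] using hprop hk₂ hk₁₂ 2 3
  have hw : w = 0 := by simpa [tripleCoords, hx, hy, hz] using hprop hk₂ hk₁₂ 3 4
  exact ⟨by simp [← hxy, hx, hy], by simp [← hzw, hz, hw]⟩

theorem apply_left_eq_zero_and_eq_zero (hpow : IsPowerMap ω β ε f) (h : IsJacobiPair ω β)
    [FiniteDimensional F V] (hf : IsAdaptedFrame ω a b₁ b₂) (hW : Module.finrank F W = 2)
    (hP : Module.finrank F V < Module.finrank F P) : f a = 0 ∧ ε = 0 := by
  obtain ⟨hb₁, hb₂⟩ := hpow.apply_right_eq_zero h hf hW hP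
  obtain ⟨m, n, hmn⟩ := hf.exists_eq_smul_add_smul hW (f a)
  have hk : tripleCoords 1 0 0 m n ∈ frameRelations ω β a b₁ b₂ :=
    hpow.tripleCoords_mem_frameRelations h hf hW (zero_mem _) (by simp [hmn])
  have hk₁ : tripleCoords 1 1 0 (m - ε) n ∈ frameRelations ω β a b₁ b₂ := by
    refine hpow.tripleCoords_mem_frameRelations h hf hW (zero_mem _) ?_
    rw [zero_smul, one_smul, one_smul, add_zero, add_zero, hpow.map_add, hb₁, ← hmn,
      ← h.isAlt.neg a b₁]
    module
  have hk₂ : tripleCoords 1 0 1 m (n - ε) ∈ frameRelations ω β a b₁ b₂ := by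
    refine hpow.tripleCoords_mem_frameRelations h hf hW (zero_mem _) ?_
    rw [zero_smul, one_smul, one_smul, add_zero, add_zero, hpow.map_add, hb₂, ← hmn,
      ← h.isAlt.neg a b₂]
    module
  have hn : n = 0 := by
    simpa [tripleCoords] using h.mul_apply_comm_of_mem_frameRelations hf hW hP hk hk₁ 1 3
  have hm : m = 0 := by
    simpa [tripleCoords] using h.mul_apply_comm_of_mem_frameRelations hf hW hP hk hk₂ 0 3
  have hε : ε = 0 := by
    simpa [tripleCoords, hm, hn] using
      h.mul_apply_comm_of_mem_frameRelations hf hW hP hk₁ hk₂ 0 1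
  exact ⟨by rw [← hmn, hm, hn, zero_smul, zero_smul, add_zero], hε⟩

theorem apply_eq_zero_of_mem_ker (hpow : IsPowerMap ω β ε f) (h : IsJacobiPair ω β)
    [FiniteDimensional F V] (hf : IsAdaptedFrame ω a b₁ b₂) (hW : Module.finrank F W = 2)
    (hP : Module.finrank F V < Module.finrank F P) {r : V} (hr : r ∈ LinearMap.ker ω) :
    f r = 0 := by
  have hrv (v : V) : ω r v = 0 := LinearMap.congr_fun hr v
  obtain ⟨hb₁, -⟩ := hpow.apply_right_eq_zero h hf hW hP
  obtain ⟨ha, -⟩ := hpow.apply_left_eq_zero_and_eq_zero h hf hW hP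
  obtain ⟨m, n, hmn⟩ := hf.exists_eq_smul_add_smul hW (f r)
  have hk : tripleCoords 1 0 0 m n ∈ frameRelations ω β a b₁ b₂ :=
    hpow.tripleCoords_mem_frameRelations h hf hW hr (by simp [hpow.map_add, ha, hrv, hmn])
  have hk₁ : tripleCoords 0 1 0 m n ∈ frameRelations ω β a b₁ b₂ :=
    hpow.tripleCoords_mem_frameRelations h hf hW hr (by simp [hpow.map_add, hb₁, hrv, hmn])
  have hm : m = 0 := by
    simpa [tripleCoords] using h.mul_apply_comm_of_mem_frameRelations hf hW hP hk hk₁ 0 2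
  have hn : n = 0 := by
    simpa [tripleCoords] using h.mul_apply_comm_of_mem_frameRelations hf hW hP hk hk₁ 1 3
  rw [← hmn, hm, hn, zero_smul, zero_smul, add_zero]

theorem eq_zero_of_zmod {p : ℕ} [Fact p.Prime] {V W P : Type*} [AddCommGroup V]
    [Module (ZMod p) V] [FiniteDimensional (ZMod p) V] [AddCommGroup W] [Module (ZMod p) W]
    [AddCommGroup P] [Module (ZMod p) P] {ω : V →ₗ[ZMod p] V →ₗ[ZMod p] W}
    {β : V →ₗ[ZMod p] W →ₗ[ZMod p] P} {ε : ZMod p} {f : V → W} {a b₁ b₂ : V}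
    (hpow : IsPowerMap ω β ε f) (h : IsJacobiPair ω β) (hf : IsAdaptedFrame ω a b₁ b₂)
    (hW : Module.finrank (ZMod p) W = 2)
    (hP : Module.finrank (ZMod p) V < Module.finrank (ZMod p) P) (v : V) : f v = 0 := by
  obtain ⟨hb₁, hb₂⟩ := hpow.apply_right_eq_zero h hf hW hP
  obtain ⟨ha, rfl⟩ := hpow.apply_left_eq_zero_and_eq_zero h hf hW hP
  let f' : V →ₗ[ZMod p] W :=
    (AddMonoidHom.mk' f fun u v => by rw [hpow.map_add, zero_smul, add_zero]).toZModLinearMap p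
  have htop : (⊤ : Submodule (ZMod p) V) ≤ LinearMap.ker f' := by
    rw [← hf.span_sup_ker, sup_le_iff, Submodule.span_le]
    refine ⟨?_, fun r hr => hpow.apply_eq_zero_of_mem_ker h hf hW hP hr⟩
    rintro _ (rfl | rfl | rfl)
    exacts [ha, hb₁, hb₂]
  exact htop (Submodule.mem_top (x := v))

end IsPowerMap

end JacobiPair

/-! ### Groups of class two -/

section ClassTwo

open scoped IsMulCommutative

variable {G : Type u} [Group G]

theorem map_mem_commutator {H : Type v} [Group H] (f : H →* G) {x : H} (hx : x ∈ commutator H) :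
    f x ∈ commutator G :=
  Subgroup.commutator_mono le_top le_top
    (Subgroup.map_commutator ⊤ ⊤ f ▸ Subgroup.mem_map_of_mem f hx)

theorem isMulCommutative_of_le_center {N : Subgroup G} (hN : N ≤ Subgroup.center G) :
    IsMulCommutative N :=
  .of_setLike_mul_comm fun _ ha b _ => (Subgroup.mem_center_iff.mp (hN ha) b).symm

theorem isCentralExtension_mk_center :
    IsCentralExtension (QuotientGroup.mk' (Subgroup.center G)) where
  surjective := QuotientGroup.mk'_surjective _
  ker_le_center := (QuotientGroup.ker_mk' _).le

theorem commutator_le_of_sup_center_eq_top {K : Subgroup G} (hK : K ⊔ Subgroup.center G = ⊤) :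
    commutator G ≤ K := by
  refine Subgroup.commutator_le.mpr fun x _ y _ => ?_
  have hx : x ∈ K ⊔ Subgroup.center G := hK ▸ Subgroup.mem_top x
  have hy : y ∈ K ⊔ Subgroup.center G := hK ▸ Subgroup.mem_top y
  obtain ⟨k, hk, z, hz, rfl⟩ := Subgroup.mem_sup_of_normal_right.mp hx
  obtain ⟨l, hl, w, hw, rfl⟩ := Subgroup.mem_sup_of_normal_right.mp hy
  have hkl : ⁅k * z, l * w⁆ = ⁅k, l⁆ := by
    rw [(isCentralExtension_mk_center).commutatorElement_congr]
    · exact QuotientGroup.mk_mul_of_mem k hz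
    · exact QuotientGroup.mk_mul_of_mem l hw
  rw [hkl]
  exact K.mul_mem (K.mul_mem (K.mul_mem hk hl) (K.inv_mem hk)) (K.inv_mem hl)

theorem eq_top_of_sup_commutator_eq_top (hcen : commutator G ≤ Subgroup.center G) {K : Subgroup G}
    (hK : K ⊔ commutator G = ⊤) : K = ⊤ := by
  rw [← hK, eq_comm, sup_eq_left]
  exact commutator_le_of_sup_center_eq_top (top_le_iff.mp (hK ▸ sup_le_sup_left hcen K))

theorem pow_eq_one_of_mem_commutator {p : ℕ} {K L : Subgroup G} [IsMulCommutative ↥⁅K, L⁆]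
    (hpow : ∀ k ∈ K, ∀ l ∈ L, ⁅k, l⁆ ^ p = 1) {x : G} (hx : x ∈ ⁅K, L⁆) : x ^ p = 1 := by
  let N := (powMonoidHom p : ↥⁅K, L⁆ →* ↥⁅K, L⁆).ker
  have hN : ⁅K, L⁆ ≤ N.map ⁅K, L⁆.subtype := Subgroup.commutator_le.mpr fun k hk l hl =>
    ⟨⟨⁅k, l⁆, Subgroup.commutator_mem_commutator hk hl⟩, Subtype.ext (hpow k hk l hl), rfl⟩
  obtain ⟨y, hy, rfl⟩ := hN hx
  exact congrArg Subtype.val hy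

theorem mul_pow_of_commutatorElement_mem_center {g k : G} (hc : ⁅k, g⁆ ∈ Subgroup.center G)
    (n : ℕ) : (g * k) ^ n = g ^ n * k ^ n * ⁅k, g⁆ ^ n.choose 2 := by
  have hcomm (x : G) : Commute x ⁅k, g⁆ := Subgroup.mem_center_iff.mp hc x
  have hsemi : SemiconjBy g (k * ⁅k, g⁆) k := by
    rw [SemiconjBy, (hcomm k).eq, ← mul_assoc, (hcomm g).eq, commutatorElement_def]
    group
  induction n with
  | zero => simp
  | succ n ih =>
    have hswap : k ^ n * g = g * k ^ n * ⁅k, g⁆ ^ n := by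
      rw [← (hsemi.pow_right n).eq, (hcomm k).mul_pow, mul_assoc]
    have hchoose := ((hcomm (g * k)).pow_right (n.choose 2)).eq
    calc (g * k) ^ (n + 1) = g ^ n * k ^ n * (g * k) * ⁅k, g⁆ ^ n.choose 2 := by
          rw [pow_succ, ih, mul_assoc _ _ (g * k), ← hchoose, mul_assoc _ (g * k)]
      _ = g ^ n * (k ^ n * g) * k * ⁅k, g⁆ ^ n.choose 2 := by simp only [mul_assoc]
      _ = g ^ n * g * k ^ n * (⁅k, g⁆ ^ n * k) * ⁅k, g⁆ ^ n.choose 2 := by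
          simp only [hswap, mul_assoc]
      _ = g ^ (n + 1) * k ^ (n + 1) * ⁅k, g⁆ ^ (n + 1).choose 2 := by
          rw [← ((hcomm k).pow_right n).eq, Nat.choose_succ_succ', Nat.choose_one_right]
          simp only [pow_succ, pow_add, mul_assoc]

/-- The class of `g` in the abelianization, written additively. -/
def abClass (g : G) : Additive (Abelianization G) :=
  .ofMul (.of g)

theorem abClass_surjective : Function.Surjective (abClass (G := G)) :=
  QuotientGroup.mk_surjective

theorem abClass_mul (g k : G) : abClass (g * k) = abClass g + abClass k := rfl

theorem abClass_eq_abClass_iff {g k : G} : abClass g = abClass k ↔ g⁻¹ * k ∈ commutator G :=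
  QuotientGroup.eq

theorem isCentralExtension_abelianization_of (hcen : commutator G ≤ Subgroup.center G) :
    IsCentralExtension (Abelianization.of : G →* Abelianization G) where
  surjective := QuotientGroup.mk_surjective
  ker_le_center := by rwa [Abelianization.ker_of]

theorem abelianization_pow_eq_one {p : ℕ} (hpow : ∀ g : G, g ^ p ∈ commutator G)
    (u : Abelianization G) : u ^ p = 1 := by
  obtain ⟨g, rfl⟩ := abClass_surjective u
  change Abelianization.of g ^ p = 1
  rw [← map_pow, ← MonoidHom.mem_ker, Abelianization.ker_of]
  exact hpow g

theorem pow_eq_one_of_forall_pow_mem_commutator {p : ℕ} (hcen : commutator G ≤ Subgroup.center G)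
    (hpow : ∀ g : G, g ^ p ∈ commutator G) {w : G} (hw : w ∈ commutator G) : w ^ p = 1 := by
  have : IsMulCommutative (⁅(⊤ : Subgroup G), ⊤⁆ : Subgroup G) := isMulCommutative_of_le_center hcen
  refine pow_eq_one_of_mem_commutator (K := ⊤) (L := ⊤) (fun g _ k _ => ?_) hw
  exact (isCentralExtension_abelianization_of hcen).commutatorElement_pow_eq_one
    (Subgroup.mem_center_iff.mpr fun _ => mul_comm _ _) (abelianization_pow_eq_one hpow _) k

theorem pow_eq_pow_of_abClass_eq {p : ℕ} (hcen : commutator G ≤ Subgroup.center G)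
    (hpow : ∀ g : G, g ^ p ∈ commutator G) {g k : G} (hgk : abClass g = abClass k) :
    g ^ p = k ^ p := by
  have hw := abClass_eq_abClass_iff.mp hgk
  have hcomm : Commute g (g⁻¹ * k) := Subgroup.mem_center_iff.mp (hcen hw) g
  rw [← mul_inv_cancel_left g k, hcomm.mul_pow,
    pow_eq_one_of_forall_pow_mem_commutator hcen hpow hw, mul_one]

theorem closure_eq_top_of_span_abClass_eq_top {p : ℕ}
    [Module (ZMod p) (Additive (Abelianization G))] (hcen : commutator G ≤ Subgroup.center G)
    {S : Set G} (hS : Submodule.span (ZMod p) (abClass '' S) = ⊤) : Subgroup.closure S = ⊤ := by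
  refine eq_top_of_sup_commutator_eq_top hcen (Subgroup.eq_top_iff' _ |>.mpr fun g => ?_)
  let N := ((Subgroup.closure S).map Abelianization.of).toAddSubgroup
  have hN : abClass g ∈ AddSubgroup.toZModSubmodule p N := by
    refine Submodule.span_le.mpr ?_ (hS ▸ Submodule.mem_top : _ ∈ Submodule.span _ (abClass '' S))
    rintro _ ⟨s, hs, rfl⟩
    exact ⟨s, Subgroup.subset_closure hs, rfl⟩
  obtain ⟨k, hk, hkg⟩ := hN
  rw [← mul_inv_cancel_left k g]
  exact Subgroup.mul_mem_sup hk (abClass_eq_abClass_iff.mp hkg)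

theorem span_eq_top_of_forall_commutatorElement {p : ℕ} {N K L : Subgroup G} (hN : N ≤ ⁅K, L⁆)
    [IsMulCommutative N] [Module (ZMod p) (Additive N)] {T : Set (Additive N)}
    (hT : ∀ k ∈ K, ∀ l ∈ L, ∃ t ∈ T, (t.toMul : G) = ⁅k, l⁆) :
    Submodule.span (ZMod p) T = ⊤ := by
  let S : AddSubgroup (Additive N) := (Submodule.span (ZMod p) T).toAddSubgroup
  have hS : N ≤ (AddSubgroup.toSubgroup' S).map N.subtype :=
    hN.trans <| Subgroup.commutator_le.mpr fun k hk l hl => by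
      obtain ⟨t, ht, htkl⟩ := hT k hk l hl
      have htS : t ∈ S := Submodule.subset_span ht
      exact ⟨t.toMul, htS, htkl⟩
  refine Submodule.eq_top_iff'.mpr fun x => ?_
  obtain ⟨y, hy, hyx⟩ := hS x.toMul.2
  rwa [← ofMul_toMul x, ← (Subtype.ext hyx : y = x.toMul)]

theorem exists_bilinear_of_surjective {p : ℕ} {A B M N Q : Type*} [Mul A] [Mul B] [AddCommGroup M]
    [AddCommGroup N] [AddCommGroup Q] [Module (ZMod p) M] [Module (ZMod p) N] [Module (ZMod p) Q]
    {φ : A → M} {ψ : B → N} (hφ : Function.Surjective φ) (hψ : Function.Surjective ψ)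
    (hφ_mul : ∀ a a', φ (a * a') = φ a + φ a') (hψ_mul : ∀ c c', ψ (c * c') = ψ c + ψ c')
    {b : A → B → Q} (hcongr : ∀ a a' c c', φ a = φ a' → ψ c = ψ c' → b a c = b a' c')
    (hleft : ∀ a a' c, b (a * a') c = b a c + b a' c)
    (hright : ∀ a c c', b a (c * c') = b a c + b a c') :
    ∃ β : M →ₗ[ZMod p] N →ₗ[ZMod p] Q, ∀ a c, β (φ a) (ψ c) = b a c := by
  choose σ hσ using hφ
  choose τ hτ using hψ
  have hadd (x x' : M) (y : N) : b (σ (x + x')) (τ y) = b (σ x) (τ y) + b (σ x') (τ y) := by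
    rw [← hleft]
    exact hcongr _ _ _ _ (by rw [hφ_mul, hσ, hσ, hσ]) rfl
  have hadd' (x : M) (y y' : N) : b (σ x) (τ (y + y')) = b (σ x) (τ y) + b (σ x) (τ y') := by
    rw [← hright]
    exact hcongr _ _ _ _ rfl (by rw [hψ_mul, hτ, hτ, hτ])
  refine ⟨LinearMap.mk₂ (ZMod p) (fun x y => b (σ x) (τ y)) hadd (fun c x y => ?_) hadd'
    fun c x y => ?_, fun a c => hcongr _ _ _ _ (hσ _) (hτ _)⟩
  · exact ZMod.map_smul (AddMonoidHom.mk' (fun x => b (σ x) (τ y)) fun x x' => hadd x x' y) c x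
  · exact ZMod.map_smul (AddMonoidHom.mk' (fun y => b (σ x) (τ y)) (hadd' x)) c y

section CommutatorPair

variable {H : Type v} [Group H] {π : H →* G} {p : ℕ} [IsMulCommutative (commutator G)]
  [IsMulCommutative (gammaThree H)] [Module (ZMod p) (Additive (Abelianization G))]
  [Module (ZMod p) (Additive (commutator G))] [Module (ZMod p) (Additive (gammaThree H))]

theorem exists_commutatorForm (hcen : commutator G ≤ Subgroup.center G) :
    ∃ ω : Additive (Abelianization G) →ₗ[ZMod p] Additive (Abelianization G) →ₗ[ZMod p]
        Additive (commutator G),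
      ∀ x y : G, ω (abClass x) (abClass y) =
        .ofMul ⟨⁅x, y⁆, commutatorElement_mem_commutator x y⟩ := by
  have h := isCentralExtension_abelianization_of hcen
  have hmem (g : G) : Abelianization.of g ∈ Subgroup.center (Abelianization G) :=
    Subgroup.mem_center_iff.mpr fun _ => mul_comm _ _
  refine exists_bilinear_of_surjective abClass_surjective abClass_surjective abClass_mul
    abClass_mul (fun x x' y y' hx hy => ?_) (fun x x' y => ?_) fun x y y' => ?_
  · exact congrArg Additive.ofMul (Subtype.ext (h.commutatorElement_congr hx hy))
  · exact congrArg Additive.ofMul (Subtype.ext (h.commutatorElement_mul_left (hmem x') x y))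
  · exact congrArg Additive.ofMul (Subtype.ext (h.commutatorElement_mul_right (hmem x) y y'))

theorem IsCentralExtension.exists_tripleCommutatorForm (h : IsCentralExtension π)
    (hcen : commutator G ≤ Subgroup.center G) :
    ∃ β : Additive (Abelianization G) →ₗ[ZMod p] Additive (commutator G) →ₗ[ZMod p]
        Additive (gammaThree H),
      ∀ (y : H) (x : commutator H) (w : commutator G), π x = w →
        β (abClass (π y)) (.ofMul w) =
          .ofMul ⟨⁅(x : H), y⁆, Subgroup.commutator_mem_commutator x.2 (Subgroup.mem_top y)⟩ := by
  have hmem (x : commutator H) : π x ∈ commutator G := map_mem_commutator π x.2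
  suffices hβ : ∃ β : Additive (Abelianization G) →ₗ[ZMod p] Additive (commutator G) →ₗ[ZMod p]
      Additive (gammaThree H), ∀ (y : H) (x : commutator H),
        β (abClass (π y)) (.ofMul ⟨π x, hmem x⟩) =
          .ofMul ⟨⁅(x : H), y⁆, Subgroup.commutator_mem_commutator x.2 (Subgroup.mem_top y)⟩ by
    obtain ⟨β, hβ⟩ := hβ
    refine ⟨β, fun y x w hw => ?_⟩
    rw [← hβ y x, ← (Subtype.ext hw : (⟨π x, hmem x⟩ : commutator G) = w)]
  refine exists_bilinear_of_surjective (φ := fun y : H => abClass (π y))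
    (ψ := fun x : commutator H => Additive.ofMul (⟨π x, hmem x⟩ : commutator G))
    (abClass_surjective.comp h.surjective) (fun w => ?_) (fun y y' => ?_) (fun x x' => ?_)
    (fun y y' x x' hy hx => ?_) (fun y y' x => ?_) fun y x x' => ?_
  · obtain ⟨x, hx, hxw⟩ := h.exists_mem_commutator_map_eq w.toMul.2
    exact ⟨⟨x, hx⟩, congrArg Additive.ofMul (Subtype.ext hxw)⟩
  · rw [map_mul, abClass_mul]
  · exact congrArg Additive.ofMul (Subtype.ext (map_mul π (x : H) x'))
  · refine congrArg Additive.ofMul (Subtype.ext ?_)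
    have hyy' : ⁅(x : H), y⁻¹ * y'⁆ = 1 := by
      refine h.commutatorElement_eq_one_of_map_mem_commutator (hcen (hmem x)) ?_
      rw [map_mul, map_inv]
      exact abClass_eq_abClass_iff.mp hy
    calc ⁅(x : H), y⁆ = ⁅(x : H), y * (y⁻¹ * y')⁆ := by
          rw [h.commutatorElement_mul_right (hcen (hmem x)), hyy', mul_one]
      _ = ⁅(x' : H), y'⁆ := by
          rw [mul_inv_cancel_left]
          exact h.commutatorElement_congr (congrArg (fun w => (w.toMul : G)) hx) rfl
  · exact congrArg Additive.ofMul <| Subtype.ext <|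
      h.commutatorElement_mul_right (hcen (hmem x)) y y'
  · exact congrArg Additive.ofMul <| Subtype.ext <|
      h.commutatorElement_mul_left (hcen (hmem x')) x y

/-- The pairing `ω` is induced by commutators on the abelianization of `G`, and `β` by commutators
in `H` of preimages of elements of `G'` with preimages of elements of `G`. -/
structure IsCommutatorPair (π : H →* G)
    (ω : Additive (Abelianization G) →ₗ[ZMod p] Additive (Abelianization G) →ₗ[ZMod p]
      Additive (commutator G))
    (β : Additive (Abelianization G) →ₗ[ZMod p] Additive (commutator G) →ₗ[ZMod p]
      Additive (gammaThree H)) : Prop where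
  left_apply : ∀ x y : G,
    ω (abClass x) (abClass y) = .ofMul ⟨⁅x, y⁆, commutatorElement_mem_commutator x y⟩
  right_apply : ∀ (y : H) (x : commutator H) (w : commutator G), π x = w →
    β (abClass (π y)) (.ofMul w) =
      .ofMul ⟨⁅(x : H), y⁆, Subgroup.commutator_mem_commutator x.2 (Subgroup.mem_top y)⟩

theorem IsCentralExtension.exists_isCommutatorPair (h : IsCentralExtension π)
    (hcen : commutator G ≤ Subgroup.center G) :
    ∃ (ω : Additive (Abelianization G) →ₗ[ZMod p] Additive (Abelianization G) →ₗ[ZMod p]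
        Additive (commutator G))
      (β : Additive (Abelianization G) →ₗ[ZMod p] Additive (commutator G) →ₗ[ZMod p]
        Additive (gammaThree H)), IsCommutatorPair π ω β :=
  let ⟨ω, hω⟩ := exists_commutatorForm hcen
  let ⟨β, hβ⟩ := h.exists_tripleCommutatorForm hcen
  ⟨ω, β, hω, hβ⟩

namespace IsCommutatorPair

variable [Fact p.Prime]
  {ω : Additive (Abelianization G) →ₗ[ZMod p] Additive (Abelianization G) →ₗ[ZMod p]
    Additive (commutator G)}
  {β : Additive (Abelianization G) →ₗ[ZMod p] Additive (commutator G) →ₗ[ZMod p]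
    Additive (gammaThree H)}

theorem isJacobiPair (hωβ : IsCommutatorPair π ω β) (h : IsCentralExtension π)
    (hcen : commutator G ≤ Subgroup.center G) : IsJacobiPair ω β where
  isAlt v := by
    obtain ⟨x, rfl⟩ := abClass_surjective v
    rw [hωβ.left_apply]
    exact congrArg Additive.ofMul (Subtype.ext (commutatorElement_self x))
  span_left := by
    refine span_eq_top_of_forall_commutatorElement (commutator_def G).le fun x _ y _ => ?_
    exact ⟨_, ⟨abClass x, abClass y, rfl⟩, by rw [hωβ.left_apply, toMul_ofMul]⟩
  span_right := by
    refine span_eq_top_of_forall_commutatorElement le_rfl fun x hx y _ => ?_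
    have hπx := map_mem_commutator π hx
    refine ⟨_, ⟨abClass (π y), .ofMul ⟨π x, hπx⟩, rfl⟩, ?_⟩
    rw [hωβ.right_apply y ⟨x, hx⟩ ⟨π x, hπx⟩ rfl, toMul_ofMul]
  jacobi u v w := by
    obtain ⟨x, rfl⟩ := (abClass_surjective.comp h.surjective) u
    obtain ⟨y, rfl⟩ := (abClass_surjective.comp h.surjective) v
    obtain ⟨z, rfl⟩ := (abClass_surjective.comp h.surjective) w
    have hβω (a b c : H) : β (abClass (π a)) (ω (abClass (π b)) (abClass (π c))) =
        .ofMul ⟨⁅⁅b, c⁆, a⁆, Subgroup.commutator_mem_commutator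
          (commutatorElement_mem_commutator b c) (Subgroup.mem_top a)⟩ := by
      rw [hωβ.left_apply]
      exact hωβ.right_apply a ⟨⁅b, c⁆, commutatorElement_mem_commutator b c⟩ _
        (map_commutatorElement π b c)
    simp only [Function.comp_apply, hβω]
    exact congrArg Additive.ofMul (Subtype.ext (h.commutatorElement_jacobi hcen y z x))

theorem exists_isPowerMap (hωβ : IsCommutatorPair π ω β) (h : IsCentralExtension π)
    (hcen : commutator G ≤ Subgroup.center G) (hpow : ∀ g : G, g ^ p ∈ commutator G) :
    ∃ f : Additive (Abelianization G) → Additive (commutator G),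
      (∀ g, f (abClass g) = .ofMul ⟨g ^ p, hpow g⟩) ∧ IsPowerMap ω β (p.choose 2 : ZMod p) f := by
  choose σ hσ using abClass_surjective (G := G)
  let f (u : Additive (Abelianization G)) : Additive (commutator G) :=
    .ofMul ⟨σ u ^ p, hpow (σ u)⟩
  have hf (g : G) : f (abClass g) = .ofMul ⟨g ^ p, hpow g⟩ :=
    congrArg Additive.ofMul (Subtype.ext (pow_eq_pow_of_abClass_eq hcen hpow (hσ _)))
  refine ⟨f, hf, fun u v => ?_, fun u => ?_⟩
  · obtain ⟨g, rfl⟩ := abClass_surjective u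
    obtain ⟨k, rfl⟩ := abClass_surjective v
    rw [← abClass_mul, hf, hf, hf, hωβ.left_apply, Nat.cast_smul_eq_nsmul]
    exact congrArg Additive.ofMul <| Subtype.ext <|
      mul_pow_of_commutatorElement_mem_center (hcen (commutatorElement_mem_commutator k g)) p
  · obtain ⟨y, rfl⟩ := (abClass_surjective.comp h.surjective) u
    obtain ⟨x, hx, hxy⟩ := h.exists_mem_commutator_map_eq (hpow (π y))
    rw [Function.comp_apply, hf, hωβ.right_apply y ⟨x, hx⟩ _ hxy]
    refine congrArg Additive.ofMul (Subtype.ext ?_)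
    calc ⁅x, y⁆ = ⁅y ^ p, y⁆ := h.commutatorElement_congr (hxy.trans (map_pow π y p).symm) rfl
      _ = 1 := commutatorElement_eq_one_iff_commute.mpr (Commute.pow_self y p)

theorem ne_two_and_pow_eq_one (hωβ : IsCommutatorPair π ω β)
    (h : IsCentralExtension π) (hcen : commutator G ≤ Subgroup.center G)
    (hpow : ∀ g : G, g ^ p ∈ commutator G) [Finite G]
    (hW : Module.finrank (ZMod p) (Additive (commutator G)) = 2)
    (hP : Module.finrank (ZMod p) (Additive (Abelianization G)) <
      Module.finrank (ZMod p) (Additive (gammaThree H))) :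
    p ≠ 2 ∧ ∀ g : G, g ^ p = 1 := by
  have hJ := hωβ.isJacobiPair h hcen
  obtain ⟨a, b₁, b₂, hf⟩ := hJ.exists_isAdaptedFrame hW hP
  obtain ⟨f, hfg, hpf⟩ := hωβ.exists_isPowerMap h hcen hpow
  refine ⟨?_, fun g => ?_⟩
  · rintro rfl
    have hε := (hpf.apply_left_eq_zero_and_eq_zero hJ hf hW hP).2
    rw [Nat.choose_self, Nat.cast_one] at hε
    exact one_ne_zero hε
  · have hg := hpf.eq_zero_of_zmod hJ hf hW hP (abClass g)
    rw [hfg] at hg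
    exact congrArg Subtype.val (ofMul_eq_zero.mp hg)

theorem exists_commute_and_closure_eq_top (hωβ : IsCommutatorPair π ω β)
    (h : IsCentralExtension π) (hcen : commutator G ≤ Subgroup.center G) [Finite G]
    (hW : Module.finrank (ZMod p) (Additive (commutator G)) = 2)
    (hP : Module.finrank (ZMod p) (Additive (Abelianization G)) <
      Module.finrank (ZMod p) (Additive (gammaThree H))) :
    ∃ a b₁ b₂ : G, Commute b₁ b₂ ∧
      ((Module.finrank (ZMod p) (Additive (Abelianization G)) = 3 ∧
          Subgroup.closure {a, b₁, b₂} = ⊤) ∨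
        (Module.finrank (ZMod p) (Additive (Abelianization G)) = 4 ∧
          ∃ r ∈ Subgroup.center G, Subgroup.closure {r, a, b₁, b₂} = ⊤)) := by
  have hJ := hωβ.isJacobiPair h hcen
  have commute_of (x y : G) (hxy : ω (abClass x) (abClass y) = 0) : Commute x y := by
    rw [hωβ.left_apply] at hxy
    exact commutatorElement_eq_one_iff_commute.mp
      (congrArg Subtype.val (ofMul_eq_zero.mp hxy))
  obtain ⟨v, w₁, w₂, hf⟩ := hJ.exists_isAdaptedFrame hW hP
  obtain ⟨a, rfl⟩ := abClass_surjective v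
  obtain ⟨b₁, rfl⟩ := abClass_surjective w₁
  obtain ⟨b₂, rfl⟩ := abClass_surjective w₂
  refine ⟨a, b₁, b₂, commute_of b₁ b₂ hf.apply_eq_zero, ?_⟩
  obtain ⟨hV, hspan⟩ | ⟨hV, u, hu, hspan⟩ := hf.span_eq_top_or_exists_span_eq_top hJ.isAlt
    (hJ.finrank_ker_le_one hf hW hP)
  · refine Or.inl ⟨hV, closure_eq_top_of_span_abClass_eq_top (p := p) hcen ?_⟩
    rwa [Set.image_insert_eq, Set.image_pair]
  · obtain ⟨r, rfl⟩ := abClass_surjective u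
    refine Or.inr ⟨hV, r, Subgroup.mem_center_iff.mpr fun y => ?_,
      closure_eq_top_of_span_abClass_eq_top (p := p) hcen ?_⟩
    · exact (commute_of r y (LinearMap.congr_fun hu (abClass y))).symm
    · rwa [Set.image_insert_eq, Set.image_insert_eq, Set.image_pair]

end IsCommutatorPair

end CommutatorPair

theorem card_eq_pow_finrank_zmod (p : ℕ) [Fact p.Prime] (M : Type*) [AddCommGroup M]
    [Module (ZMod p) M] [Finite M] : Nat.card M = p ^ Module.finrank (ZMod p) M := by
  rw [Module.natCard_eq_pow_finrank (K := ZMod p), Nat.card_zmod]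

theorem IsCentralExtension.pow_eq_one_of_mem_gammaThree {H : Type v} [Group H] {π : H →* G}
    {p : ℕ} (h : IsCentralExtension π) (hcen : commutator G ≤ Subgroup.center G)
    (hpow : ∀ g : G, g ^ p ∈ commutator G) [IsMulCommutative (gammaThree H)] {x : H}
    (hx : x ∈ gammaThree H) : x ^ p = 1 := by
  refine pow_eq_one_of_mem_commutator (fun c hc v _ => ?_) hx
  have hπc := map_mem_commutator π hc
  exact h.commutatorElement_pow_eq_one (hcen hπc)
    (pow_eq_one_of_forall_pow_mem_commutator hcen hpow hπc) v

theorem IsCentralExtension.gammaThree_le_center {H : Type v} [Group H] {π : H →* G}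
    (h : IsCentralExtension π) (hcen : commutator G ≤ Subgroup.center G) :
    gammaThree H ≤ Subgroup.center H := by
  refine le_trans (Subgroup.commutator_le.mpr fun x hx y _ => ?_) h.ker_le_center
  exact IsCentralExtension.map_commutatorElement_eq_one (hcen (map_mem_commutator π hx)) y

theorem IsCentralExtension.ne_two_and_pow_eq_one_and_exists_generators {H : Type v} [Group H]
    {π : H →* G} {p n : ℕ} [hp : Fact p.Prime] (h : IsCentralExtension π) (hG : Nat.card G = p ^ n)
    (hG' : Nat.card (commutator G) = p ^ 2) (hcen : commutator G ≤ Subgroup.center G)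
    (hpow : ∀ g : G, g ^ p ∈ commutator G) (hH : p ^ (n - 1) ≤ Nat.card (gammaThree H)) :
    p ≠ 2 ∧ (∀ g : G, g ^ p = 1) ∧ ∃ a b₁ b₂ : G, Commute b₁ b₂ ∧
      ((n = 5 ∧ Subgroup.closure {a, b₁, b₂} = ⊤) ∨
        (n = 6 ∧ ∃ r ∈ Subgroup.center G, Subgroup.closure {r, a, b₁, b₂} = ⊤)) := by
  have := isMulCommutative_of_le_center hcen
  have := isMulCommutative_of_le_center (h.gammaThree_le_center hcen)
  have : Finite G := Nat.finite_of_card_ne_zero (hG ▸ pow_ne_zero n hp.out.ne_zero)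
  have : Finite (gammaThree H) :=
    Nat.finite_of_card_ne_zero (((pow_pos hp.out.pos _).trans_le hH).ne')
  let : Module (ZMod p) (Additive (Abelianization G)) := AddCommGroup.zmodModule fun u =>
    congrArg Additive.ofMul (abelianization_pow_eq_one hpow u.toMul)
  let : Module (ZMod p) (Additive (commutator G)) := AddCommGroup.zmodModule fun w =>
    congrArg Additive.ofMul <| Subtype.ext <|
      pow_eq_one_of_forall_pow_mem_commutator hcen hpow w.toMul.2
  let : Module (ZMod p) (Additive (gammaThree H)) := AddCommGroup.zmodModule fun x =>
    congrArg Additive.ofMul <| Subtype.ext <|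
      h.pow_eq_one_of_mem_gammaThree hcen hpow x.toMul.2
  have hV := card_eq_pow_finrank_zmod p (Additive (Abelianization G))
  have hW := card_eq_pow_finrank_zmod p (Additive (commutator G))
  have hP := card_eq_pow_finrank_zmod p (Additive (gammaThree H))
  obtain ⟨hn, hindex⟩ := index_eq_pow_sub hp.out.one_lt hG hG'
  have hV' : Module.finrank (ZMod p) (Additive (Abelianization G)) = n - 2 :=
    Nat.pow_right_injective hp.out.two_le (hV.symm.trans hindex)
  have hW' : Module.finrank (ZMod p) (Additive (commutator G)) = 2 :=
    Nat.pow_right_injective hp.out.two_le (hW.symm.trans hG')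
  have hP' : n - 1 ≤ Module.finrank (ZMod p) (Additive (gammaThree H)) :=
    (Nat.pow_le_pow_iff_right hp.out.one_lt).mp (hP ▸ hH)
  obtain ⟨ω, β, hωβ⟩ := h.exists_isCommutatorPair (p := p) hcen
  obtain ⟨hp2, hexp⟩ := hωβ.ne_two_and_pow_eq_one h hcen hpow hW' (by omega)
  obtain ⟨a, b₁, b₂, hb, hgen⟩ := hωβ.exists_commute_and_closure_eq_top h hcen hW' (by omega)
  refine ⟨hp2, hexp, a, b₁, b₂, hb, hgen.imp (And.imp_left ?_) (And.imp_left ?_)⟩ <;> omega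

end ClassTwo

/-! ### The group `R⁴ ⋊ R` -/

/-- The action of the additive group of `R` on `R⁴` in which `x` sends `(y₁, y₂, z₁, z₂)` to
`(y₁, y₂, x y₁ + z₁, x y₂ + z₂)`. -/
def shear (R : Type u) [CommRing R] :
    Multiplicative R →* MulAut (Fin 4 → Multiplicative R) where
  toFun x :=
    { toFun v := ![v 0, v 1, .ofAdd (x.toAdd * (v 0).toAdd) * v 2,
        .ofAdd (x.toAdd * (v 1).toAdd) * v 3]
      invFun v := ![v 0, v 1, .ofAdd (-x.toAdd * (v 0).toAdd) * v 2,
        .ofAdd (-x.toAdd * (v 1).toAdd) * v 3]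
      left_inv v := by ext i; fin_cases i <;> simp
      right_inv v := by ext i; fin_cases i <;> simp
      map_mul' v w := by ext i; fin_cases i <;> simp [mul_add, add_add_add_comm] }
  map_one' := by ext v i; fin_cases i <;> simp
  map_mul' x y := by ext v i; fin_cases i <;> simp [add_mul, add_assoc]

section Shear

variable {R : Type u} [CommRing R]

theorem shear_mulSingle_zero (x y : Multiplicative R) :
    shear R x (Pi.mulSingle 0 y) =
      Pi.mulSingle 2 (.ofAdd (x.toAdd * y.toAdd)) * Pi.mulSingle 0 y := by
  ext i; fin_cases i <;> simp [shear]

theorem shear_mulSingle_one (x y : Multiplicative R) :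
    shear R x (Pi.mulSingle 1 y) =
      Pi.mulSingle 3 (.ofAdd (x.toAdd * y.toAdd)) * Pi.mulSingle 1 y := by
  ext i; fin_cases i <;> simp [shear]

theorem shear_mulSingle_two (x y : Multiplicative R) :
    shear R x (Pi.mulSingle 2 y) = Pi.mulSingle 2 y := by
  ext i; fin_cases i <;> simp [shear]

theorem shear_mulSingle_three (x y : Multiplicative R) :
    shear R x (Pi.mulSingle 3 y) = Pi.mulSingle 3 y := by
  ext i; fin_cases i <;> simp [shear]

end Shear

/-- The semidirect product `R⁴ ⋊ R` along `shear R`. -/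
abbrev ShearProduct (R : Type u) [CommRing R] : Type u :=
  (Fin 4 → Multiplicative R) ⋊[shear R] Multiplicative R

namespace ShearProduct

variable {R : Type u} [CommRing R]

/-- The element `((y₁, y₂, z₁, z₂), x)` of `R⁴ ⋊ R`. -/
def mk (x y₁ y₂ z₁ z₂ : R) : ShearProduct R :=
  ⟨![.ofAdd y₁, .ofAdd y₂, .ofAdd z₁, .ofAdd z₂], .ofAdd x⟩

theorem one_def : (1 : ShearProduct R) = mk 0 0 0 0 0 := by
  refine SemidirectProduct.ext ?_ rfl
  funext i
  fin_cases i <;> rfl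

theorem mk_mul_mk (x y₁ y₂ z₁ z₂ x' y₁' y₂' z₁' z₂' : R) :
    mk x y₁ y₂ z₁ z₂ * mk x' y₁' y₂' z₁' z₂' =
      mk (x + x') (y₁ + y₁') (y₂ + y₂') (z₁ + z₁' + x * y₁') (z₂ + z₂' + x * y₂') := by
  refine SemidirectProduct.ext (funext fun i => Multiplicative.toAdd.injective ?_) rfl
  fin_cases i
  · rfl
  · rfl
  · exact (by ring : z₁ + (x * y₁' + z₁') = z₁ + z₁' + x * y₁')
  · exact (by ring : z₂ + (x * y₂' + z₂') = z₂ + z₂' + x * y₂')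

theorem mk_surjective (k : ShearProduct R) : ∃ x y₁ y₂ z₁ z₂, mk x y₁ y₂ z₁ z₂ = k := by
  refine ⟨k.right.toAdd, (k.left 0).toAdd, (k.left 1).toAdd, (k.left 2).toAdd, (k.left 3).toAdd,
    SemidirectProduct.ext (funext fun i => ?_) rfl⟩
  fin_cases i <;> rfl

theorem mk_inj {x y₁ y₂ z₁ z₂ x' y₁' y₂' z₁' z₂' : R} :
    mk x y₁ y₂ z₁ z₂ = mk x' y₁' y₂' z₁' z₂' ↔
      x = x' ∧ y₁ = y₁' ∧ y₂ = y₂' ∧ z₁ = z₁' ∧ z₂ = z₂' := by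
  refine ⟨fun h => ?_, fun h => by simp only [h]⟩
  have hleft := congrFun (congrArg SemidirectProduct.left h)
  exact ⟨congrArg SemidirectProduct.right h, hleft 0, hleft 1, hleft 2, hleft 3⟩

theorem card_eq (R : Type u) [CommRing R] : Nat.card (ShearProduct R) = Nat.card R ^ 5 := by
  rw [Nat.card_congr SemidirectProduct.equivProd, Nat.card_prod, Nat.card_fun, Nat.card_fin,
    Nat.card_congr Multiplicative.toAdd, ← pow_succ]

theorem commutatorElement_mk (x y₁ y₂ z₁ z₂ x' y₁' y₂' z₁' z₂' : R) :
    ⁅mk x y₁ y₂ z₁ z₂, mk x' y₁' y₂' z₁' z₂'⁆ =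
      mk 0 0 0 (x * y₁' - x' * y₁) (x * y₂' - x' * y₂) := by
  rw [commutatorElement_def, mul_inv_eq_iff_eq_mul, mul_inv_eq_iff_eq_mul]
  simp only [mk_mul_mk]
  congr 1 <;> ring

theorem mem_center_iff {k : ShearProduct R} :
    k ∈ Subgroup.center (ShearProduct R) ↔ ∃ z₁ z₂, mk 0 0 0 z₁ z₂ = k := by
  simp only [Subgroup.mem_center_iff, ← commutatorElement_eq_one_iff_mul_comm]
  constructor
  · obtain ⟨x, y₁, y₂, z₁, z₂, rfl⟩ := mk_surjective k
    intro h
    have hy := h (mk 1 0 0 0 0)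
    have hx := h (mk 0 1 0 0 0)
    simp only [commutatorElement_mk, one_def, mk_inj, one_mul, mul_zero, sub_zero, mul_one,
      zero_mul, zero_sub, neg_eq_zero, true_and] at hx hy
    exact ⟨z₁, z₂, mk_inj.mpr ⟨hx.1.symm, hy.1.symm, hy.2.symm, rfl, rfl⟩⟩
  · rintro ⟨z₁, z₂, rfl⟩ g
    obtain ⟨x, y₁, y₂, w₁, w₂, rfl⟩ := mk_surjective g
    simp only [commutatorElement_mk, one_def, mul_zero, zero_mul, sub_zero]

theorem commutator_eq_center (R : Type u) [CommRing R] :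
    commutator (ShearProduct R) = Subgroup.center (ShearProduct R) := by
  apply le_antisymm
  · rw [commutator_def, Subgroup.commutator_le]
    intro g _ k _
    obtain ⟨x, y₁, y₂, z₁, z₂, rfl⟩ := mk_surjective g
    obtain ⟨x', y₁', y₂', z₁', z₂', rfl⟩ := mk_surjective k
    exact mem_center_iff.mpr ⟨_, _, (commutatorElement_mk ..).symm⟩
  · intro k hk
    obtain ⟨z₁, z₂, rfl⟩ := mem_center_iff.mp hk
    have hcomm : ⁅(mk 1 0 0 0 0 : ShearProduct R), mk 0 z₁ z₂ 0 0⁆ = mk 0 0 0 z₁ z₂ := by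
      simp only [commutatorElement_mk, one_mul, zero_mul, sub_zero]
    exact hcomm ▸ commutatorElement_mem_commutator _ _

theorem card_center (R : Type u) [CommRing R] :
    Nat.card (Subgroup.center (ShearProduct R)) = Nat.card R ^ 2 := by
  let f (z : R × R) : Subgroup.center (ShearProduct R) :=
    ⟨mk 0 0 0 z.1 z.2, mem_center_iff.mpr ⟨z.1, z.2, rfl⟩⟩
  have hf : Function.Bijective f := by
    refine ⟨fun z z' h => ?_, fun ⟨k, hk⟩ => ?_⟩
    · obtain ⟨-, -, -, h₁, h₂⟩ := mk_inj.mp (congrArg Subtype.val h)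
      exact Prod.ext h₁ h₂
    · obtain ⟨z₁, z₂, rfl⟩ := mem_center_iff.mp hk
      exact ⟨(z₁, z₂), rfl⟩
  rw [← Nat.card_eq_of_bijective f hf, Nat.card_prod, sq]

end ShearProduct

section ZModPow

variable {G : Type u} [Group G] {p : ℕ}

/-- The homomorphism `x ↦ g ^ x` from the additive group of integers modulo `p`, for `g ^ p = 1`. -/
def zmodPowHom {g : G} (hg : g ^ p = 1) : Multiplicative (ZMod p) →* G :=
  AddMonoidHom.toMultiplicativeLeft (ZMod.lift p ⟨zmultiplesHom (Additive G) (.ofMul g), by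
    rw [zmultiplesHom_apply, natCast_zsmul, ← ofMul_pow, hg, ofMul_one]⟩)

theorem zmodPowHom_ofAdd_intCast {g : G} (hg : g ^ p = 1) (k : ℤ) :
    zmodPowHom hg (.ofAdd (k : ZMod p)) = g ^ k :=
  congrArg Additive.toMul (ZMod.lift_coe p _ k)

theorem mem_range_zmodPowHom {g : G} (hg : g ^ p = 1) : g ∈ (zmodPowHom hg).range :=
  ⟨.ofAdd ((1 : ℤ) : ZMod p), by rw [zmodPowHom_ofAdd_intCast, zpow_one]⟩

theorem commute_zmodPowHom {g k : G} (hg : g ^ p = 1) (h : Commute g k)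
    (x : Multiplicative (ZMod p)) : Commute (zmodPowHom hg x) k := by
  obtain ⟨m, rfl⟩ := ZMod.intCast_surjective x
  exact zmodPowHom_ofAdd_intCast hg m ▸ h.zpow_left m

theorem commutatorElement_zmodPowHom (hcen : commutator G ≤ Subgroup.center G) {g k : G}
    (hg : g ^ p = 1) (hk : k ^ p = 1) (hgk : ⁅g, k⁆ ^ p = 1) (x y : ZMod p) :
    ⁅zmodPowHom hg (.ofAdd x), zmodPowHom hk (.ofAdd y)⁆ = zmodPowHom hgk (.ofAdd (x * y)) := by
  obtain ⟨m, rfl⟩ := ZMod.intCast_surjective x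
  obtain ⟨n, rfl⟩ := ZMod.intCast_surjective y
  have h := isCentralExtension_abelianization_of hcen
  have hab (u : Abelianization G) : u ∈ Subgroup.center (Abelianization G) :=
    Subgroup.mem_center_iff.mpr fun _ => mul_comm _ _
  rw [← Int.cast_mul, zmodPowHom_ofAdd_intCast, zmodPowHom_ofAdd_intCast, zmodPowHom_ofAdd_intCast,
    h.commutatorElement_zpow_left (hab _), mul_comm, zpow_mul]
  exact congrArg (· ^ m) (map_zpow (h.commutatorHom (hab _)) k n)

end ZModPow

/-- The homomorphism `v ↦ ∏ i, w i ^ v i` for a family of commuting elements `w i` with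
`w i ^ p = 1`. -/
def zmodPowPiHom {G ι : Type*} [Group G] [Fintype ι] {p : ℕ} {w : ι → G} (hp : ∀ i, w i ^ p = 1)
    (hw : ∀ i j, Commute (w i) (w j)) : (ι → Multiplicative (ZMod p)) →* G :=
  MonoidHom.noncommPiCoprod (fun i => zmodPowHom (hp i)) fun i j _ x y =>
    commute_zmodPowHom _ (commute_zmodPowHom _ (hw j i) y).symm x

theorem zmodPowPiHom_mulSingle {G ι : Type*} [Group G] [Fintype ι] [DecidableEq ι] {p : ℕ}
    {w : ι → G} (hp : ∀ i, w i ^ p = 1) (hw : ∀ i j, Commute (w i) (w j)) (i : ι)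
    (y : Multiplicative (ZMod p)) :
    zmodPowPiHom hp hw (Pi.mulSingle i y) = zmodPowHom (hp i) y :=
  MonoidHom.noncommPiCoprod_mulSingle ..

theorem pi_hom_ext {M ι : Type*} [Monoid M] [Finite ι] [DecidableEq ι] {N : ι → Type*}
    [∀ i, Monoid (N i)] {f g : (∀ i, N i) →* M}
    (h : ∀ i y, f (Pi.mulSingle i y) = g (Pi.mulSingle i y)) : f = g := by
  cases nonempty_fintype ι
  exact MonoidHom.noncommPiCoprodEquiv.symm.injective
    (Subtype.ext (funext fun i => MonoidHom.ext (h i)))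

theorem nonempty_mulEquiv_of_surjective {G : Type u} {K : Type v} [Group G] [Group K]
    [Finite G] (f : K →* G) (hf : Function.Surjective f) (hcard : Nat.card K = Nat.card G) :
    Nonempty (G ≃* K) := by
  have : Finite K := Nat.finite_of_card_ne_zero (hcard ▸ Nat.card_pos.ne')
  exact ⟨(MulEquiv.ofBijective f ((Nat.bijective_iff_surjective_and_card f).mpr
    ⟨hf, hcard⟩)).symm⟩

namespace ShearProduct

variable {G : Type u} [Group G] {p : ℕ} {a b₁ b₂ : G}

/-- The images in a group of the coordinate vectors of `R⁴` under the homomorphism from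
`ShearProduct R` that sends `x` to `a` and `y₁`, `y₂` to `b₁`, `b₂`. -/
def coordinateImages (a b₁ b₂ : G) : Fin 4 → G := ![b₁, b₂, ⁅a, b₁⁆, ⁅a, b₂⁆]

theorem commute_coordinateImages (hcen : commutator G ≤ Subgroup.center G) (a : G)
    (hb : Commute b₁ b₂) (i j : Fin 4) :
    Commute (coordinateImages a b₁ b₂ i) (coordinateImages a b₁ b₂ j) := by
  have hc (g k : G) : ⁅g, k⁆ ∈ Subgroup.center G := hcen (commutatorElement_mem_commutator g k)
  fin_cases i <;> fin_cases j <;>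
    first
    | exact .refl _ | exact hb | exact hb.symm
    | exact Subgroup.mem_center_iff.mp (hc _ _) _
    | exact (Subgroup.mem_center_iff.mp (hc _ _) _).symm

theorem zmodPowPiHom_shear (hcen : commutator G ≤ Subgroup.center G) (hexp : ∀ g : G, g ^ p = 1)
    (hb : Commute b₁ b₂) (x : Multiplicative (ZMod p)) :
    (zmodPowPiHom (fun _ => hexp _) (commute_coordinateImages hcen a hb)).comp
        (shear (ZMod p) x).toMonoidHom =
      (MulAut.conj (zmodPowHom (hexp a) x)).toMonoidHom.comp
        (zmodPowPiHom (fun _ => hexp _) (commute_coordinateImages hcen a hb)) := by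
  set f := zmodPowPiHom (p := p) (fun _ => hexp _) (commute_coordinateImages hcen a hb)
  have hf (i : Fin 4) (y : Multiplicative (ZMod p)) :
      f (Pi.mulSingle i y) = zmodPowHom (hexp (coordinateImages a b₁ b₂ i)) y :=
    zmodPowPiHom_mulSingle ..
  have hc (b : G) (y : Multiplicative (ZMod p)) :
      Commute (zmodPowHom (hexp a) x) (zmodPowHom (hexp ⁅a, b⁆) y) :=
    (commute_zmodPowHom _ (Subgroup.mem_center_iff.mp
      (hcen (commutatorElement_mem_commutator a b)) _).symm y).symm
  have hconj (b : G) (y : Multiplicative (ZMod p)) :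
      zmodPowHom (hexp ⁅a, b⁆) (.ofAdd (x.toAdd * y.toAdd)) * zmodPowHom (hexp b) y =
        zmodPowHom (hexp a) x * zmodPowHom (hexp b) y * (zmodPowHom (hexp a) x)⁻¹ := by
    rw [← commutatorElement_zmodPowHom hcen (hexp a) (hexp b), commutatorElement_def,
      ofAdd_toAdd, ofAdd_toAdd, inv_mul_cancel_right]
  refine pi_hom_ext fun i y => ?_
  change f (shear (ZMod p) x (Pi.mulSingle i y)) =
    zmodPowHom (hexp a) x * f (Pi.mulSingle i y) * (zmodPowHom (hexp a) x)⁻¹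
  match i with
  | 0 => rw [shear_mulSingle_zero, map_mul, hf, hf]; exact hconj b₁ y
  | 1 => rw [shear_mulSingle_one, map_mul, hf, hf]; exact hconj b₂ y
  | 2 => rw [shear_mulSingle_two, hf]; exact eq_mul_inv_of_mul_eq (hc b₁ y).symm
  | 3 => rw [shear_mulSingle_three, hf]; exact eq_mul_inv_of_mul_eq (hc b₂ y).symm

theorem exists_hom_subset_range (hcen : commutator G ≤ Subgroup.center G)
    (hexp : ∀ g : G, g ^ p = 1) (a : G) (hb : Commute b₁ b₂) :
    ∃ f : ShearProduct (ZMod p) →* G, {a, b₁, b₂} ⊆ (f.range : Set G) := by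
  let f := SemidirectProduct.lift _ _ (zmodPowPiHom_shear (a := a) hcen hexp hb)
  have hb_mem (i : Fin 4) : coordinateImages a b₁ b₂ i ∈ f.range := by
    obtain ⟨y, hy⟩ := mem_range_zmodPowHom (hexp (coordinateImages a b₁ b₂ i))
    exact ⟨.inl (Pi.mulSingle i y), by
      rw [SemidirectProduct.lift_inl, zmodPowPiHom_mulSingle, hy]⟩
  obtain ⟨x, hx⟩ := mem_range_zmodPowHom (hexp a)
  refine ⟨f, ?_⟩
  rintro _ (rfl | rfl | rfl)
  exacts [⟨.inr x, by rw [SemidirectProduct.lift_inr, hx]⟩, hb_mem 0, hb_mem 1]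

theorem nonempty_mulEquiv [NeZero p] (hG : Nat.card G = p ^ 5)
    (hcen : commutator G ≤ Subgroup.center G) (hexp : ∀ g : G, g ^ p = 1) (hb : Commute b₁ b₂)
    (hgen : Subgroup.closure {a, b₁, b₂} = ⊤) : Nonempty (G ≃* ShearProduct (ZMod p)) := by
  have : Finite G := Nat.finite_of_card_ne_zero (hG ▸ pow_ne_zero 5 (NeZero.ne p))
  obtain ⟨f, hf⟩ := exists_hom_subset_range hcen hexp a hb
  refine nonempty_mulEquiv_of_surjective f ?_ ?_
  · exact MonoidHom.range_eq_top.mp (top_unique (hgen ▸ (Subgroup.closure_le _).mpr hf))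
  · rw [card_eq, Nat.card_zmod, hG]

theorem nonempty_mulEquiv_zmod_prod [NeZero p] (hG : Nat.card G = p ^ 6)
    (hcen : commutator G ≤ Subgroup.center G) (hexp : ∀ g : G, g ^ p = 1) (hb : Commute b₁ b₂)
    {r : G} (hr : r ∈ Subgroup.center G) (hgen : Subgroup.closure {r, a, b₁, b₂} = ⊤) :
    Nonempty (G ≃* Multiplicative (ZMod p) × ShearProduct (ZMod p)) := by
  have : Finite G := Nat.finite_of_card_ne_zero (hG ▸ pow_ne_zero 6 (NeZero.ne p))
  obtain ⟨f, hf⟩ := exists_hom_subset_range hcen hexp a hb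
  let F := (zmodPowHom (hexp r)).noncommCoprod f fun x k =>
    commute_zmodPowHom _ (Subgroup.mem_center_iff.mp hr (f k)).symm x
  have hF : F.range = (zmodPowHom (hexp r)).range ⊔ f.range := MonoidHom.noncommCoprod_range ..
  refine nonempty_mulEquiv_of_surjective F ?_ ?_
  · refine MonoidHom.range_eq_top.mp (top_unique (hgen ▸ (Subgroup.closure_le _).mpr ?_))
    rw [hF]
    exact Set.insert_subset (le_sup_left (a := (zmodPowHom (hexp r)).range)
      (mem_range_zmodPowHom _)) (hf.trans (SetLike.coe_subset_coe.mpr le_sup_right))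
  · rw [Nat.card_prod, card_eq, Nat.card_congr Multiplicative.toAdd, Nat.card_zmod, hG,
      ← pow_succ']

end ShearProduct

/-! ### Normalized 2-cocycles -/

/-- A normalized 2-cocycle of `G` with coefficients in the abelian group `A`, on which `G` acts
trivially. -/
structure IsNormalizedCocycle {G : Type u} {A : Type v} [Group G] [AddCommGroup A]
    (f : G → G → A) : Prop where
  map_one_left : ∀ g, f 1 g = 0
  map_one_right : ∀ g, f g 1 = 0
  cocycle : ∀ g h k, f h k + f g (h * k) = f (g * h) k + f g h

/-- The central extension of `G` by `A` defined by a normalized 2-cocycle `f`: the set of pairs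
`(g, a)` with the product `(g, a) (h, b) = (g h, a + b + f g h)`. -/
@[ext]
structure CocycleExtension {G : Type u} {A : Type v} [Group G] [AddCommGroup A] {f : G → G → A}
    (hf : IsNormalizedCocycle f) where
  fst : G
  snd : A

namespace CocycleExtension

variable {G : Type u} {A : Type v} [Group G] [AddCommGroup A] {f : G → G → A}
  {hf : IsNormalizedCocycle f}

instance : Mul (CocycleExtension hf) := ⟨fun a b => ⟨a.fst * b.fst, a.snd + b.snd + f a.fst b.fst⟩⟩

instance : One (CocycleExtension hf) := ⟨⟨1, 0⟩⟩

instance : Inv (CocycleExtension hf) := ⟨fun a => ⟨a.fst⁻¹, -a.snd - f a.fst⁻¹ a.fst⟩⟩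

theorem snd_mul (a b : CocycleExtension hf) : (a * b).snd = a.snd + b.snd + f a.fst b.fst := rfl

instance : Group (CocycleExtension hf) :=
  Group.ofLeftAxioms
    (fun a b c => CocycleExtension.ext (mul_assoc a.fst b.fst c.fst) <| by
      have hcocycle : f b.fst c.fst + f a.fst (b * c).fst = f (a * b).fst c.fst + f a.fst b.fst :=
        hf.cocycle a.fst b.fst c.fst
      calc ((a * b) * c).snd
          = a.snd + b.snd + c.snd + (f (a * b).fst c.fst + f a.fst b.fst) := by
            rw [snd_mul, snd_mul]; abel
        _ = (a * (b * c)).snd := by rw [← hcocycle, snd_mul, snd_mul]; abel)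
    (fun a => CocycleExtension.ext (one_mul a.fst) <| by
      change 0 + a.snd + f 1 a.fst = a.snd
      rw [hf.map_one_left, zero_add, add_zero])
    (fun a => CocycleExtension.ext (inv_mul_cancel a.fst) <| by
      change -a.snd - f a.fst⁻¹ a.fst + a.snd + f a.fst⁻¹ a.fst = 0
      abel)

/-- The projection `(g, a) ↦ g` of a cocycle extension. -/
def proj (hf : IsNormalizedCocycle f) : CocycleExtension hf →* G where
  toFun := fst
  map_one' := rfl
  map_mul' _ _ := rfl

theorem isCentralExtension_proj (hf : IsNormalizedCocycle f) : IsCentralExtension (proj hf) where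
  surjective g := ⟨⟨g, 0⟩, rfl⟩
  ker_le_center a ha := by
    have hfst : a.fst = 1 := ha
    refine Subgroup.mem_center_iff.mpr fun b => CocycleExtension.ext ?_ ?_
    · change b.fst * a.fst = a.fst * b.fst
      rw [hfst, mul_one, one_mul]
    · rw [snd_mul, snd_mul, hfst, hf.map_one_left, hf.map_one_right, add_comm b.snd]

/-- The projection `(1, a) ↦ a` of the kernel of a cocycle extension onto the coefficients. -/
def kerHom (hf : IsNormalizedCocycle f) : (proj hf).ker →* Multiplicative A where
  toFun a := .ofAdd a.1.snd
  map_one' := rfl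
  map_mul' a b := by
    have ha : a.1.fst = 1 := a.2
    rw [Subgroup.coe_mul, snd_mul, ha, hf.map_one_left, add_zero, ofAdd_add]

theorem snd_commutatorElement (a b : CocycleExtension hf) (hab : Commute a.fst b.fst) :
    ⁅a, b⁆.snd = f a.fst b.fst - f b.fst a.fst := by
  have hfst : ⁅a, b⁆.fst = 1 :=
    (map_commutatorElement (proj hf) a b).trans (commutatorElement_eq_one_iff_commute.mpr hab)
  have hsnd : (a * b).snd = ⁅a, b⁆.snd + (b * a).snd := by
    rw [← add_zero (_ + _), ← hf.map_one_left (b * a).fst, ← hfst, ← snd_mul]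
    simp only [commutatorElement_def, mul_assoc, inv_mul_cancel_left, inv_mul_cancel, mul_one]
  rw [snd_mul, snd_mul, add_comm b.snd, add_left_comm] at hsnd
  exact eq_sub_of_add_eq (add_left_cancel hsnd).symm

end CocycleExtension

theorem IsNormalizedCocycle.comp {G : Type u} {A : Type v} [Group G] [AddCommGroup A]
    {f : G → G → A} (hf : IsNormalizedCocycle f) {K : Type w} [Group K] (φ : K →* G) :
    IsNormalizedCocycle fun g h => f (φ g) (φ h) where
  map_one_left g := by rw [map_one, hf.map_one_left]
  map_one_right g := by rw [map_one, hf.map_one_right]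
  cocycle g h k := by rw [map_mul, map_mul, hf.cocycle]

theorem IsNormalizedCocycle.card_dvd_card_schurMultiplier {G : Type u} {A : Type v} [Group G]
    [AddCommGroup A] {f : G → G → A} (hf : IsNormalizedCocycle f)
    (hspan : AddSubgroup.closure {a | ∃ g h, Commute g h ∧ f g h - f h g = a} = ⊤) :
    Nat.card A ∣ Nat.card (SchurMultiplier G) := by
  let N := (FreeCentralExtension.proj G).ker ⊓ commutator (FreeCentralExtension G)
  obtain ⟨ψ, hψ⟩ := FreeCentralExtension.exists_hom_comp_eq_proj
    (CocycleExtension.isCentralExtension_proj hf)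
  have hker (x : N) : ψ x ∈ (CocycleExtension.proj hf).ker :=
    (DFunLike.congr_fun hψ x.1).trans x.2.1
  let Φ : Additive N →+ A := MonoidHom.toAdditiveLeft
    ((CocycleExtension.kerHom hf).comp ((ψ.comp N.subtype).codRestrict _ hker))
  have hΦ : Function.Surjective Φ := by
    refine AddMonoidHom.range_eq_top.mp
      (top_unique (hspan ▸ (AddSubgroup.closure_le _).mpr ?_))
    rintro _ ⟨g, h, hgh, rfl⟩
    obtain ⟨g, rfl⟩ := (FreeCentralExtension.isCentralExtension_proj G).surjective g
    obtain ⟨h, rfl⟩ := (FreeCentralExtension.isCentralExtension_proj G).surjective h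
    have hmem : ⁅g, h⁆ ∈ N :=
      ⟨(map_commutatorElement _ g h).trans (commutatorElement_eq_one_iff_commute.mpr hgh),
        commutatorElement_mem_commutator g h⟩
    refine ⟨.ofMul ⟨_, hmem⟩, ?_⟩
    change (ψ ⁅g, h⁆).snd = _
    rw [← hψ] at hgh ⊢
    rw [map_commutatorElement]
    exact CocycleExtension.snd_commutatorElement (ψ g) (ψ h) hgh
  rw [← FreeCentralExtension.card_ker_proj_inf_commutator]
  exact (AddSubgroup.card_dvd_of_surjective Φ hΦ : Nat.card A ∣ Nat.card (Additive N))

namespace ShearProduct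

variable {R : Type u} [CommRing R]

/-- A cocycle of `ShearProduct R` whose values on commuting pairs give six independent classes of
the Schur multiplier. For `2 * t = 1` the expression `t * (x * (x - 1))` is the binomial coefficient
`x.choose 2`. -/
def cocycle (t : R) (k l : ShearProduct R) : Fin 6 → R :=
  let (x, y₁) := (k.right.toAdd, (k.left 0).toAdd)
  let (z₁, z₂) := ((k.left 2).toAdd, (k.left 3).toAdd)
  let (y₁', y₂') := ((l.left 0).toAdd, (l.left 1).toAdd)
  let (z₁', z₂') := ((l.left 2).toAdd, (l.left 3).toAdd)
  ![x * z₁' + t * (x * (x - 1)) * y₁',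
    x * z₂' + t * (x * (x - 1)) * y₂',
    z₁ * y₁' + x * (t * (y₁' * (y₁' - 1))),
    z₂ * y₂' + x * (t * (y₂' * (y₂' - 1))),
    (z₁ + z₂) * (y₁' + y₂') + x * (t * ((y₁' + y₂') * (y₁' + y₂' - 1))),
    y₁ * y₂']

theorem cocycle_mk (t x y₁ y₂ z₁ z₂ x' y₁' y₂' z₁' z₂' : R) :
    cocycle t (mk x y₁ y₂ z₁ z₂) (mk x' y₁' y₂' z₁' z₂') =
      ![x * z₁' + t * (x * (x - 1)) * y₁',
        x * z₂' + t * (x * (x - 1)) * y₂',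
        z₁ * y₁' + x * (t * (y₁' * (y₁' - 1))),
        z₂ * y₂' + x * (t * (y₂' * (y₂' - 1))),
        (z₁ + z₂) * (y₁' + y₂') + x * (t * ((y₁' + y₂') * (y₁' + y₂' - 1))),
        y₁ * y₂'] := rfl

theorem isNormalizedCocycle_cocycle {t : R} (ht : 2 * t = 1) :
    IsNormalizedCocycle (cocycle t) where
  map_one_left k := by
    obtain ⟨x, y₁, y₂, z₁, z₂, rfl⟩ := mk_surjective k
    ext i
    fin_cases i <;> simp [one_def, cocycle_mk]
  map_one_right k := by
    obtain ⟨x, y₁, y₂, z₁, z₂, rfl⟩ := mk_surjective k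
    ext i
    fin_cases i <;> simp [one_def, cocycle_mk]
  cocycle g h k := by
    obtain ⟨x, y₁, y₂, z₁, z₂, rfl⟩ := mk_surjective g
    obtain ⟨x', y₁', y₂', z₁', z₂', rfl⟩ := mk_surjective h
    obtain ⟨x'', y₁'', y₂'', z₁'', z₂'', rfl⟩ := mk_surjective k
    ext i
    fin_cases i <;>
      simp only [mk_mul_mk, cocycle_mk, Pi.add_apply, Fin.zero_eta, Fin.mk_one, Fin.reduceFinMk,
        Matrix.cons_val]
    · linear_combination (-x * x' * y₁'') * ht
    · linear_combination (-x * x' * y₂'') * ht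
    · linear_combination (x * y₁' * y₁'') * ht
    · linear_combination (x * y₂' * y₂'') * ht
    · linear_combination (x * (y₁' + y₂') * (y₁'' + y₂'')) * ht
    · ring

theorem closure_cocycle_sub_cocycle_eq_top (t : R) :
    AddSubgroup.closure {d | ∃ k l : ShearProduct R, Commute k l ∧
      cocycle t k l - cocycle t l k = d} = ⊤ := by
  refine top_unique fun d _ => ?_
  have mem (k l : ShearProduct R) (hkl : ⁅k, l⁆ = 1) :
      cocycle t k l - cocycle t l k ∈ AddSubgroup.closure {d | ∃ k l : ShearProduct R,
        Commute k l ∧ cocycle t k l - cocycle t l k = d} :=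
    AddSubgroup.subset_closure ⟨k, l, commutatorElement_eq_one_iff_commute.mp hkl, rfl⟩
  have h₀ := mem (mk 1 0 0 0 0) (mk 0 0 0 (d 0) 0) (by simp [commutatorElement_mk, one_def])
  have h₁ := mem (mk 1 0 0 0 0) (mk 0 0 0 0 (d 1)) (by simp [commutatorElement_mk, one_def])
  have h₂ := mem (mk 0 0 0 (d 2) 0) (mk 0 1 0 0 0) (by simp [commutatorElement_mk, one_def])
  have h₃ := mem (mk 0 0 0 0 (d 3)) (mk 0 0 1 0 0) (by simp [commutatorElement_mk, one_def])
  have h₄ := mem (mk 0 0 0 (d 4 - d 2 - d 3) 0) (mk 0 0 1 0 0)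
    (by simp [commutatorElement_mk, one_def])
  have h₅ := mem (mk 0 (d 5) 0 0 0) (mk 0 0 1 0 0) (by simp [commutatorElement_mk, one_def])
  convert add_mem (add_mem (add_mem (add_mem (add_mem h₀ h₁) h₂) h₃) h₄) h₅ using 1
  ext i
  fin_cases i <;> simp [cocycle_mk]

theorem card_pow_dvd_card_schurMultiplier {t : R} (ht : 2 * t = 1) {G : Type v} [Group G]
    (e : G ≃* ShearProduct R) : Nat.card R ^ 6 ∣ Nat.card (SchurMultiplier G) := by
  have hspan : AddSubgroup.closure {d | ∃ g h : G, Commute g h ∧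
      cocycle t (e g) (e h) - cocycle t (e h) (e g) = d} = ⊤ := by
    refine top_unique (closure_cocycle_sub_cocycle_eq_top t ▸ AddSubgroup.closure_mono ?_)
    rintro _ ⟨k, l, hkl, rfl⟩
    exact ⟨e.symm k, e.symm l, hkl.map e.symm, by rw [e.apply_symm_apply, e.apply_symm_apply]⟩
  have hdvd := ((isNormalizedCocycle_cocycle ht).comp
    e.toMonoidHom).card_dvd_card_schurMultiplier hspan
  rwa [Nat.card_fun, Nat.card_fin] at hdvd

theorem card_schurMultiplier_ne_pow_five {p : ℕ} (hp : p.Prime) (hp2 : p ≠ 2) {G : Type u} [Group G]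
    (e : G ≃* ShearProduct (ZMod p)) : Nat.card (SchurMultiplier G) ≠ p ^ 5 := by
  intro hM
  have htwo : IsUnit ((2 : ℕ) : ZMod p) :=
    (ZMod.isUnit_iff_coprime 2 p).mpr
      ((Nat.coprime_primes Nat.prime_two hp).mpr hp2.symm)
  obtain ⟨t, ht⟩ := htwo.exists_right_inv
  have hdvd := card_pow_dvd_card_schurMultiplier (R := ZMod p) (by exact_mod_cast ht) e
  rw [hM, Nat.card_zmod, Nat.pow_dvd_pow_iff_le_right hp.one_lt] at hdvd
  omega

end ShearProduct

theorem card_commutator_freeCentralExtension_eq_pow {p n : ℕ} {G : Type u} [Group G]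
    (hn : 3 ≤ n) (hG' : Nat.card (commutator G) = p ^ 2)
    (hM : Nat.card (SchurMultiplier G) = p ^ ((n - 1) * (n - 2) / 2 - 1)) :
    Nat.card (commutator (FreeCentralExtension G)) = p ^ ((n - 1).choose 2 + 1) := by
  have hle : 2 * 1 ≤ (n - 1) * (n - 2) := Nat.mul_le_mul (by omega) (by omega)
  rw [FreeCentralExtension.card_commutator, hG', hM, ← pow_add, Nat.choose_two_right,
    show n - 1 - 1 = n - 2 from rfl]
  congr 1
  omega

/-- **Theorem (classification, `|G'| = p²`, `n ≥ 5`).** Let `G` be a `p`-group of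
order `p^n` with `n ≥ 5`, `|G'| = p²` and `s(G) = 2`. Then `p ≠ 2`, `n = 6` and
`G ≅ ℤ_p × (ℤ_p⁴ ⋊_θ ℤ_p)`, where the semidirect product has derived subgroup of
order `p²` and center of order `p²`. -/
theorem classification_commutator_p_sq {p n : ℕ} (hp : p.Prime)
    {G : Type*} [Group G] (hG : Nat.card G = p ^ n) (hn : 5 ≤ n)
    (hG' : Nat.card (commutator G) = p ^ 2)
    (hM : Nat.card (SchurMultiplier G) = p ^ ((n - 1) * (n - 2) / 2 - 1)) :
    p ≠ 2 ∧ n = 6 ∧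
    ∃ θ : Multiplicative (ZMod p) →* MulAut (Fin 4 → Multiplicative (ZMod p)),
      Nat.card (commutator
        ((Fin 4 → Multiplicative (ZMod p)) ⋊[θ] Multiplicative (ZMod p))) = p ^ 2 ∧
      Nat.card (Subgroup.center
        ((Fin 4 → Multiplicative (ZMod p)) ⋊[θ] Multiplicative (ZMod p))) = p ^ 2 ∧
      Nonempty (G ≃* Multiplicative (ZMod p) ×
        ((Fin 4 → Multiplicative (ZMod p)) ⋊[θ] Multiplicative (ZMod p))) := by
  have : Fact p.Prime := ⟨hp⟩
  have h := FreeCentralExtension.isCentralExtension_proj G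
  have hH := card_commutator_freeCentralExtension_eq_pow (by omega) hG' hM
  have hcen := h.commutator_le_center_of_card_commutator_eq hG hn hG' hH
  have hpow := h.pow_mem_commutator_of_card_commutator_eq hG hn hG' hH
  have hγ := h.pow_le_card_gammaThree hp hG (by omega) hG' hH
  obtain ⟨hp2, hexp, a, b₁, b₂, hb, ⟨rfl, hgen⟩ | ⟨rfl, r, hr, hgen⟩⟩ :=
    h.ne_two_and_pow_eq_one_and_exists_generators hG hG' hcen hpow hγ
  · obtain ⟨e⟩ := ShearProduct.nonempty_mulEquiv hG hcen hexp hb hgen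
    exact absurd hM (ShearProduct.card_schurMultiplier_ne_pow_five hp hp2 e)
  · have hcard : Nat.card (Subgroup.center (ShearProduct (ZMod p))) = p ^ 2 := by
      rw [ShearProduct.card_center, Nat.card_zmod]
    exact ⟨hp2, rfl, shear (ZMod p), by rwa [ShearProduct.commutator_eq_center], hcard,
      ShearProduct.nonempty_mulEquiv_zmod_prod hG hcen hexp hb hr hgen⟩
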